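/- The quotient ring P/I is a free ℤ-module of rank 696729600. (By the main theorem of the paper, P/I is isomorphic as a graded ring to the integral cohomology ring H^*(E₈/T; ℤ) of the flag manifold E₈/T, which by the Schubert cell decomposition is free abelian of rank equal to the order 696729600 of the Weyl group W(E₈).) -/

import Mathlib

open MvPolynomial

set_option maxHeartbeats 4000000
set_option maxRecDepth 16000

noncomputable section

namespace E8T

/-- The ambient polynomial ring is `P = ℤ[t₁,…,t₈, t, γ₃, γ₄, γ₅, γ₆, γ₉, γ₁₀, γ₁₅]`,
realized as `MvPolynomial (Fin 16) ℤ` with `tᵢ = X (i-1)`, `t = X 8`,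
`γ₃ = X 9`, `γ₄ = X 10`, `γ₅ = X 11`, `γ₆ = X 12`, `γ₉ = X 13`, `γ₁₀ = X 14`,
`γ₁₅ = X 15`. -/
abbrev P := MvPolynomial (Fin 16) ℤ

def t : P := X 8
def g3 : P := X 9
def g4 : P := X 10
def g5 : P := X 11
def g6 : P := X 12
def g9 : P := X 13
def g10 : P := X 14
def g15 : P := X 15

/-- `c n` is the `n`-th elementary symmetric polynomial in `t₁,…,t₈`. -/
def c (n : ℕ) : P :=
  rename (Fin.castLE (by norm_num)) (esymm (Fin 8) ℤ n)

def rho1 : P := c 1 - 3 * t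
def rho2 : P := c 2 - 4 * t ^ 2
def rho3 : P := c 3 - 2 * g3
def rho4 : P := c 4 + 2 * t ^ 4 - 3 * g4
def rho5 : P := c 5 - 3 * t * g4 + 2 * t ^ 2 * g3 - 2 * g5
def rho6 : P := c 6 - 2 * g3 ^ 2 - t * g5 + t ^ 2 * g4 - 2 * t ^ 6 - 5 * g6
def rho8 : P :=
  -3 * c 8 + 3 * g4 ^ 2 - 2 * g3 * g5 + t * (2 * c 7 - 6 * g3 * g4)
    + t ^ 2 * (2 * g3 ^ 2 - 5 * g6) + 3 * t ^ 3 * g5 + 4 * t ^ 4 * g4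
    - 6 * t ^ 5 * g3 + t ^ 8
def rho9 : P := 2 * c 6 * g3 + t * c 8 + t ^ 2 * c 7 - 3 * t ^ 3 * c 6 - 2 * g9
def rho10 : P := g5 ^ 2 - 2 * c 7 * g3 - t ^ 2 * c 8 + 3 * t ^ 3 * c 7 - 3 * g10
def rho12 : P :=
  15 * g6 ^ 2 + 2 * g3 * g4 * g5 - 2 * c 7 * g5 + 2 * g3 ^ 4 + 10 * g3 ^ 2 * g6
    - 3 * c 8 * g4 - 2 * g4 ^ 3
    + t * (c 8 * g3 - 2 * g3 ^ 2 * g5 + 4 * c 7 * g4 + 6 * g3 * g4 ^ 2)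
    + t ^ 2 * (3 * g10 - 25 * g4 * g6 - c 7 * g3 - 16 * g3 ^ 2 * g4)
    + t ^ 3 * (25 * g3 * g6 - 3 * g4 * g5 + 10 * g3 ^ 3)
    + t ^ 4 * (3 * c 8 + 3 * g3 * g5 + 5 * g4 ^ 2)
    + t ^ 5 * (-3 * c 7 - 5 * g3 * g4)
    + 4 * t ^ 6 * g3 ^ 2 - 7 * t ^ 8 * g4 + 4 * t ^ 9 * g3
def rho14 : P :=
  c 7 ^ 2 - 3 * c 8 * g6 + 6 * g4 * g10 - 4 * c 8 * g3 ^ 2 + 6 * c 7 * g3 * g4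
    - 6 * g3 ^ 2 * g4 ^ 2 - 12 * g4 ^ 2 * g6 - 2 * g3 * g5 * g6
    + t * (24 * g3 * g4 * g6 - 8 * c 7 * g3 ^ 2 - 8 * c 7 * g6 + 4 * c 8 * g5
        - 6 * g3 * g10 + 12 * g3 ^ 3 * g4)
    + t ^ 2 * (-2 * g3 * g4 * g5 + 6 * g4 ^ 3 + 2 * g3 ^ 2 * g6 + 20 * g6 ^ 2
        - 4 * g3 ^ 4 - c 7 * g5)
    + t ^ 3 * (-12 * g3 * g4 ^ 2 + 8 * c 8 * g3 - 5 * c 7 * g4 + 3 * g5 * g6)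
    + t ^ 4 * (3 * g10 - 26 * g4 * g6 + 6 * c 7 * g3 - 4 * g3 ^ 2 * g4)
    + t ^ 5 * (24 * g3 * g6 + 3 * g4 * g5 + 12 * g3 ^ 3)
    + t ^ 6 * (-6 * c 8 + 2 * g4 ^ 2)
    - 4 * t ^ 7 * c 7 + t ^ 8 * (6 * g6 - 6 * g3 ^ 2)
    - 6 * t ^ 10 * g4 + 12 * t ^ 11 * g3 - 2 * t ^ 14
def rho15 : P :=
  (c 8 - t ^ 2 * c 6 + 2 * t ^ 3 * g5 + 3 * t ^ 4 * g4 - t ^ 8) * (c 7 - 3 * t * c 6)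
    - 2 * (g3 ^ 2 + c 6) * (g9 - c 6 * g3) - 2 * g15
def rho18 : P :=
  g9 ^ 2 - 9 * c 8 * g10 - 6 * g4 ^ 2 * g10 - 4 * g3 ^ 3 * g9 - 10 * g3 * g6 * g9
    + 2 * g3 * g5 * g10 - 2 * g3 * g4 * g5 * g6 - 6 * c 7 * g3 * g4 ^ 2
    + 3 * c 8 * g4 * g6 + c 8 * g3 ^ 2 * g4 + 6 * g3 ^ 2 * g4 ^ 3 + 12 * g4 ^ 3 * g6
    + 2 * c 7 ^ 2 * g4 + 2 * c 7 * g3 ^ 2 * g5 - 2 * g3 ^ 3 * g4 * g5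
    + 2 * c 7 * g5 * g6 + 4 * g3 ^ 6 - 10 * g6 ^ 3 + 18 * g3 ^ 4 * g6
    + 15 * g3 ^ 2 * g6 ^ 2 - 9 * c 7 * c 8 * g3
    + t * (-2 * g3 * g5 * g9 - 24 * c 7 * g4 * g6 + 8 * c 8 * g4 * g5
        + 4 * c 7 * g3 ^ 2 * g4 + 4 * c 7 * g10 - c 8 * g9 + 2 * c 7 ^ 2 * g3
        + 4 * c 8 * g3 * g6 + 12 * g3 * g4 * g10 - 36 * g3 * g4 ^ 2 * g6
        + 12 * g3 ^ 2 * g5 * g6 + c 8 * g3 ^ 3 + 6 * g3 ^ 4 * g5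
        - 18 * g3 ^ 3 * g4 ^ 2)
    + t ^ 2 * (24 * g3 ^ 4 * g4 - 2 * c 8 ^ 2 - c 7 * g9 - 11 * g3 ^ 2 * g10
        + 2 * g3 * g4 * g9 - 2 * c 8 * g3 * g5 + 16 * c 7 * g3 * g6
        - 3 * c 7 * g4 * g5 + 75 * g4 * g6 ^ 2 - 6 * g4 ^ 4 - 9 * c 8 * g4 ^ 2
        + 81 * g3 ^ 2 * g4 * g6 - 13 * g6 * g10 + 4 * g3 * g4 ^ 2 * g5
        - c 7 * g3 ^ 3)
    + t ^ 3 * (-3 * g5 * g10 - 150 * g3 * g6 ^ 2 - 135 * g3 ^ 3 * g6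
        + 6 * g3 ^ 2 * g9 - 2 * c 7 * g3 * g5 + 21 * c 7 * g4 ^ 2 + 15 * c 7 * c 8
        + 3 * g4 * g5 * g6 - 3 * g3 ^ 2 * g4 * g5 + 18 * g3 * g4 ^ 3
        + 15 * g6 * g9 + 14 * c 8 * g3 * g4 - 30 * g3 ^ 5)
    + t ^ 4 * (-13 * c 8 * g6 + 2 * g4 * g10 - 5 * c 7 ^ 2 - 33 * g3 ^ 2 * g4 ^ 2
        + 3 * g5 * g9 - 28 * g3 * g5 * g6 - 45 * g4 ^ 2 * g6 - 41 * c 7 * g3 * g4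
        - 13 * g3 ^ 3 * g5 - 9 * c 8 * g3 ^ 2)
    + t ^ 5 * (3 * c 7 * g6 - 6 * g4 ^ 2 * g5 + 23 * c 7 * g3 ^ 2
        + 105 * g3 * g4 * g6 - 6 * c 8 * g5 - 3 * g4 * g9 + 45 * g3 ^ 3 * g4)
    + t ^ 6 * (11 * g4 ^ 3 - 4 * g3 * g9 + 4 * c 7 * g5 + 9 * g3 * g4 * g5
        + 12 * g3 ^ 4 + 66 * g3 ^ 2 * g6 + 75 * g6 ^ 2 + 2 * c 8 * g4)
    + t ^ 7 * (-33 * g3 * g4 ^ 2 + 12 * g3 ^ 2 * g5 + 15 * g5 * g6)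
    + t ^ 8 * (-4 * g10 + 21 * g3 ^ 2 * g4 - 5 * c 7 * g3 - 3 * g4 * g6)
    + t ^ 9 * (6 * g9 - 42 * g3 ^ 3 - 99 * g3 * g6)
    + t ^ 10 * (-4 * c 8 - 6 * g4 ^ 2 - 13 * g3 * g5)
    + t ^ 11 * (3 * c 7 + 27 * g3 * g4)
    + t ^ 12 * (60 * g6 + 18 * g3 ^ 2)
    + 6 * t ^ 13 * g5 - 9 * t ^ 14 * g4 - 12 * t ^ 15 * g3 + 10 * t ^ 18

/-- `u = t₈`. -/
def u : P := X 7

def v : P :=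
  2 * g6 + g3 ^ 2 - u * g5 + g4 * (-t ^ 2 + u ^ 2) - u ^ 3 * g3 + t ^ 6
    - t ^ 4 * u ^ 2 + t ^ 3 * u ^ 3 + t ^ 2 * u ^ 4 - t * u ^ 5

def w : P :=
  g10 + u * g9 - u ^ 3 * c 7 - u * g4 * g5 + 2 * u ^ 2 * g4 ^ 2
    - 2 * u ^ 2 * g3 * g5
    + g3 * g4 * (-6 * t * u ^ 2 + 2 * u ^ 3)
    + g3 ^ 2 * (2 * t ^ 2 * u ^ 2 + 2 * t * u ^ 3 - 2 * u ^ 4)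
    + g6 * (-5 * t ^ 2 * u ^ 2 + 5 * t * u ^ 3)
    + g5 * (t ^ 4 * u + 3 * t ^ 3 * u ^ 2 + t ^ 2 * u ^ 3)
    + g4 * (6 * t ^ 4 * u ^ 2 - 3 * t ^ 3 * u ^ 3 - 2 * t ^ 2 * u ^ 4
        - t * u ^ 5 + u ^ 6)
    + g3 * (-6 * t ^ 5 * u ^ 2 - 2 * t ^ 4 * u ^ 3 + 4 * t ^ 3 * u ^ 4
        + 6 * t ^ 2 * u ^ 5 - 4 * t * u ^ 6 + u ^ 7)
    + 4 * t ^ 7 * u ^ 3 - 6 * t ^ 5 * u ^ 5 + 2 * t ^ 4 * u ^ 6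
    + t ^ 3 * u ^ 7 - t ^ 2 * u ^ 8

def x : P :=
  g15 - 20 * g3 * g6 ^ 2 + 3 * g3 ^ 2 * g9 - 23 * g3 ^ 3 * g6 - 6 * g3 ^ 5
    + 4 * g6 * g9 + 3 * u * g4 * g10 - u * g5 * g9 - 3 * u * g3 ^ 2 * g4 ^ 2
    + 3 * u * c 7 * g3 * g4 - 6 * u * g4 ^ 2 * g6
    + (-3 * t + 2 * u) * g3 ^ 3 * g5 + (-4 * t + 4 * u) * g3 * g5 * g6
    + (-t ^ 2 - u ^ 2) * g4 * g9 + (t ^ 2 + t * u - u ^ 2) * c 7 * g3 ^ 2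
    + (9 * t ^ 2 + 12 * t * u + 5 * u ^ 2) * g3 * g4 * g6
    + (5 * t ^ 2 + 6 * t * u + 2 * u ^ 2) * g3 ^ 3 * g4
    + (3 * t ^ 2 + 4 * t * u + u ^ 2) * c 7 * g6
    + (-6 * t ^ 3 - 2 * t ^ 2 * u - 6 * t * u ^ 2 + 5 * u ^ 3) * g3 ^ 4
    - u ^ 3 * g3 * g9
    + (3 * t ^ 2 * u + u ^ 3) * g4 ^ 3 + (2 * t ^ 2 * u + 3 * t * u ^ 2) * c 7 * g5
    + (-45 * t ^ 3 + 10 * t ^ 2 * u - 40 * t * u ^ 2) * g6 ^ 2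
    + (t ^ 3 - 2 * t ^ 2 * u + t * u ^ 2 - u ^ 3) * g3 * g4 * g5
    + (-33 * t ^ 3 + t ^ 2 * u - 31 * t * u ^ 2 + 13 * u ^ 3) * g3 ^ 2 * g6
    + (-2 * t ^ 4 - 4 * t ^ 3 * u - 3 * t * u ^ 3 + 3 * u ^ 4) * c 7 * g4
    + (-9 * t ^ 4 - 6 * t ^ 3 * u - 18 * t ^ 2 * u ^ 2 + 5 * t * u ^ 3
        - 3 * u ^ 4) * g5 * g6
    + (-3 * t ^ 4 - 3 * t ^ 3 * u - 7 * t ^ 2 * u ^ 2 + 5 * t * u ^ 3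
        - 4 * u ^ 4) * g3 ^ 2 * g5
    + (-t ^ 4 - 6 * t ^ 3 * u - t ^ 2 * u ^ 2 - 3 * t * u ^ 3) * g3 * g4 ^ 2
    + (-3 * t ^ 4 * u - 6 * t ^ 3 * u ^ 2 + 3 * t ^ 2 * u ^ 3
        + 15 * t * u ^ 4) * g10
    + (-3 * t ^ 4 * u + t ^ 3 * u ^ 2 + 5 * t ^ 2 * u ^ 3 + 10 * t * u ^ 4
        - u ^ 5) * c 7 * g3
    + (15 * t ^ 5 - 2 * t ^ 4 * u + 3 * t ^ 3 * u ^ 2 + 14 * t ^ 2 * u ^ 3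
        - 16 * t * u ^ 4 + 3 * u ^ 5) * g3 ^ 2 * g4
    + (39 * t ^ 5 - 13 * t ^ 4 * u + 8 * t ^ 3 * u ^ 2 + 35 * t ^ 2 * u ^ 3
        - 31 * t * u ^ 4 - 3 * u ^ 5) * g4 * g6
    + (t ^ 6 - t ^ 4 * u ^ 2 - t ^ 3 * u ^ 3 - t ^ 2 * u ^ 4 - t * u ^ 5
        - u ^ 6) * g9
    + (-13 * t ^ 6 + 12 * t ^ 5 * u + 5 * t ^ 4 * u ^ 2 - 56 * t ^ 3 * u ^ 3
        + 8 * t ^ 2 * u ^ 4 + 21 * t * u ^ 5 + 2 * u ^ 6) * g3 * g6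
    + (6 * t ^ 6 + 3 * t ^ 5 * u + 2 * t ^ 4 * u ^ 2 + 7 * t ^ 3 * u ^ 3
        + t ^ 2 * u ^ 4 - 8 * t * u ^ 5 + 3 * u ^ 6) * g4 * g5
    + (-8 * t ^ 6 + 6 * t ^ 5 * u + 2 * t ^ 4 * u ^ 2 - 22 * t ^ 3 * u ^ 3
        + 6 * t ^ 2 * u ^ 4 + 8 * t * u ^ 5 - 2 * u ^ 6) * g3 ^ 3
    + (-6 * t ^ 7 + t ^ 6 * u - 7 * t ^ 4 * u ^ 3 + 5 * t ^ 3 * u ^ 4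
        + 3 * t ^ 2 * u ^ 5 + 3 * t * u ^ 6 - 63 * u ^ 7) * g4 ^ 2
    + (-t ^ 7 + 2 * t ^ 6 * u + t ^ 5 * u ^ 2 - 11 * t ^ 4 * u ^ 3
        + 6 * t ^ 3 * u ^ 4 + 5 * t ^ 2 * u ^ 5 + 6 * t * u ^ 6
        + 39 * u ^ 7) * g3 * g5
    + (2 * t ^ 8 + 6 * t ^ 7 * u + 3 * t ^ 6 * u ^ 2 - 4 * t ^ 5 * u ^ 3
        - 15 * t ^ 4 * u ^ 4 + 6 * t ^ 3 * u ^ 5 + 3 * t ^ 2 * u ^ 6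
        - 40 * t * u ^ 7 + 59 * u ^ 8) * c 7
    + (3 * t ^ 8 + t ^ 6 * u ^ 2 + 11 * t ^ 5 * u ^ 3 + 14 * t ^ 4 * u ^ 4
        - 20 * t ^ 3 * u ^ 5 - 4 * t ^ 2 * u ^ 6 + 118 * t * u ^ 7
        + 3 * u ^ 8) * g3 * g4
    + (-48 * t ^ 9 + 3 * t ^ 8 * u - 41 * t ^ 7 * u ^ 2 + 18 * t ^ 6 * u ^ 3
        + 16 * t ^ 5 * u ^ 4 - 13 * t ^ 4 * u ^ 5 - 67 * t ^ 3 * u ^ 6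
        + 125 * t ^ 2 * u ^ 7 - 15 * t * u ^ 8 - 291 * u ^ 9) * g6
    + (-18 * t ^ 9 - 3 * t ^ 8 * u - 16 * t ^ 7 * u ^ 2 + 10 * t ^ 6 * u ^ 3
        - 4 * t ^ 5 * u ^ 4 - 8 * t ^ 4 * u ^ 5 - 16 * t ^ 3 * u ^ 6
        - 23 * t ^ 2 * u ^ 7 - 10 * t * u ^ 8 - 115 * u ^ 9) * g3 ^ 2
    + (-6 * t ^ 10 - 3 * t ^ 9 * u - 9 * t ^ 8 * u ^ 2 + 5 * t ^ 7 * u ^ 3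
        - 5 * t ^ 6 * u ^ 4 - 14 * t ^ 4 * u ^ 6 - 52 * t ^ 3 * u ^ 7
        + 6 * t ^ 2 * u ^ 8 - 60 * t * u ^ 9 + 117 * u ^ 10) * g5
    + (18 * t ^ 11 - 3 * t ^ 10 * u + 5 * t ^ 9 * u ^ 2 + 11 * t ^ 8 * u ^ 3
        - 28 * t ^ 7 * u ^ 4 + 8 * t ^ 6 * u ^ 5 + 20 * t ^ 5 * u ^ 6
        - 64 * t ^ 4 * u ^ 7 - 15 * t ^ 3 * u ^ 8 + 54 * t ^ 2 * u ^ 9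
        + 178 * t * u ^ 10 - 177 * u ^ 11) * g4
    + (-2 * t ^ 12 + 6 * t ^ 11 * u + 2 * t ^ 10 * u ^ 2 - 20 * t ^ 9 * u ^ 3
        + 11 * t ^ 8 * u ^ 4 + 22 * t ^ 7 * u ^ 5 - 8 * t ^ 6 * u ^ 6
        + 83 * t ^ 5 * u ^ 7 + 15 * t ^ 4 * u ^ 8 + 5 * t ^ 3 * u ^ 9
        - 116 * t ^ 2 * u ^ 10 + t * u ^ 11 + 117 * u ^ 12) * g3
    - 12 * t ^ 15 - t ^ 14 * u - 10 * t ^ 13 * u ^ 2 + 6 * t ^ 12 * u ^ 3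
    + 7 * t ^ 11 * u ^ 4 - 13 * t ^ 10 * u ^ 5 - 31 * t ^ 9 * u ^ 6
    + 9 * t ^ 8 * u ^ 7 - t ^ 7 * u ^ 8 - 118 * t ^ 6 * u ^ 9
    - 18 * t ^ 5 * u ^ 10 + 131 * t ^ 4 * u ^ 11 - 6 * t ^ 3 * u ^ 12
    - 233 * t ^ 2 * u ^ 13 + 175 * t * u ^ 14 - 58 * u ^ 15

def rho20 : P :=
  9 * u ^ 20 + 45 * u ^ 14 * v + 12 * u ^ 10 * w + 60 * u ^ 8 * v ^ 2
    + 30 * u ^ 4 * v * w + 10 * u ^ 2 * v ^ 3 + 3 * w ^ 2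

def rho24 : P :=
  11 * u ^ 24 + 60 * u ^ 18 * v + 21 * u ^ 14 * w + 105 * u ^ 12 * v ^ 2
    + 60 * u ^ 8 * v * w + 60 * u ^ 6 * v ^ 3 + 9 * u ^ 4 * w ^ 2
    + 30 * u ^ 2 * v ^ 2 * w + 5 * v ^ 4

def rho30 : P :=
  -9 * x ^ 2 - 12 * u ^ 9 * v * x - 6 * u ^ 5 * w * x + 9 * u ^ 14 * v * w
    - 10 * u ^ 12 * v ^ 3 - 3 * u ^ 10 * w ^ 2 + 30 * u ^ 8 * v ^ 2 * w
    - 35 * u ^ 6 * v ^ 4 + 6 * u ^ 4 * v * w ^ 2 - 10 * u ^ 2 * v ^ 3 * w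
    - 4 * v ^ 5 - 2 * w ^ 3

/-- The ideal of relations in the presentation `H^*(E₈/T; ℤ) ≅ P/I`. -/
def relIdeal : Ideal P :=
  Ideal.span {rho1, rho2, rho3, rho4, rho5, rho6, rho8, rho9, rho10, rho12,
    rho14, rho15, rho18, rho20, rho24, rho30}

end E8T

end

/-!
`P ⧸ relIdeal` is finitely generated over `ℤ`, and each of its fibres over `Spec ℤ` is the quotient
of a weighted polynomial ring in sixteen variables over a field by sixteen homogeneous relations
whose only common zero is the origin. As polynomial rings are Cohen–Macaulay, these relations form
a regular sequence, so the Hilbert series of the fibre is `∏ (1 - s ^ e i) / ∏ (1 - s ^ w i)` and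
its dimension is `∏ e i / ∏ w i`, whatever the field. A finitely generated module over a principal
ideal domain all of whose fibres have the same dimension is free.

That the origin is the only common zero over any field is seen through two intermediate flag
manifolds. The elements `u, v, w, x` satisfy the relations of `H^*(E₈/(E₇ × S¹))`, which force all
four to vanish. For a variable `s = t_j`, suitable elements of degrees 5 and 9 then satisfy the
relations of `H^*(E₇/(E₆ × S¹))`, which force `s = 0`. The remaining variables follow one by one.
-/

section CohenMacaulay

open RingTheory.Sequence IsLocalRing Pointwise CategoryTheory Abelian

universe u

lemma maximalIdeal_smul_top_lt {R M : Type*} [CommRing R] [IsLocalRing R] [AddCommGroup M]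
    [Module R M] [Module.Finite R M] [Nontrivial M] :
    maximalIdeal R • (⊤ : Submodule R M) < ⊤ :=
  (Submodule.top_ne_ideal_smul_of_le_jacobson_annihilator
    (maximalIdeal_le_jacobson _)).symm.lt_top

lemma subsingleton_ext_quotSMulTop {R : Type u} [CommRing R] (N M : ModuleCat.{u} R) {f : R}
    (hf : IsSMulRegular M f) {n : ℕ} (h : ∀ i < n + 1, Subsingleton (Ext N M i)) :
    ∀ i < n, Subsingleton (Ext N (ModuleCat.of R (QuotSMulTop f M)) i) := fun i hi ↦
  have h₁ := AddCommGrpCat.isZero_of_iff_subsingleton.mpr (h i (by lia))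
  have h₂ := AddCommGrpCat.isZero_of_iff_subsingleton.mpr (h (i + 1) (by lia))
  AddCommGrpCat.subsingleton_of_isZero <| ShortComplex.Exact.isZero_of_both_zeros
    (Ext.covariant_sequence_exact₃' N hf.smulShortComplex_shortExact i (i + 1) rfl)
    (h₁.eq_zero_of_src _) (h₂.eq_zero_of_tgt _)

variable {R : Type*} [CommRing R] [IsNoetherianRing R] [IsLocalRing R]
  {M : Type*} [AddCommGroup M] [Module R M] [Module.Finite R M]

lemma exists_mem_torsionBySet_notMem_smul_top {a : R} (ha : a ∈ maximalIdeal R)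
    (hreg : IsSMulRegular M a) {s : Set R} (hs : Submodule.torsionBySet R M s ≠ ⊥) :
    ∃ y ∈ Submodule.torsionBySet R M s, y ∉ a • (⊤ : Submodule R M) := by
  set T := Submodule.torsionBySet R M s
  by_contra! hT
  refine hs (Submodule.eq_bot_of_le_smul_of_le_jacobson_bot (Ideal.span {a}) T
    (IsNoetherian.noetherian T) (fun y hy ↦ ?_) ?_)
  · obtain ⟨z, -, rfl⟩ := hT y hy
    refine Submodule.smul_mem_smul (Ideal.mem_span_singleton_self a) ?_
    rw [Submodule.mem_torsionBySet_iff] at hy ⊢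
    exact fun p ↦ hreg (by simpa [smul_comm a] using hy p)
  · rwa [jacobson_eq_maximalIdeal ⊥ bot_ne_top, Ideal.span_singleton_le_iff_mem]

lemma exists_isAssociatedPrime_quotSMulTop {a : R} (ha : a ∈ maximalIdeal R)
    (hreg : IsSMulRegular M a) {Q : Ideal R} (hQ : IsAssociatedPrime Q M) :
    ∃ Q', IsAssociatedPrime Q' (QuotSMulTop a M) ∧ Q ≤ Q' ∧ a ∈ Q' := by
  obtain ⟨x, hx⟩ := (isAssociatedPrime_iff.mp hQ).2
  have hT : Submodule.torsionBySet R M Q ≠ ⊥ := fun h ↦ by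
    have hxT : x ∈ Submodule.torsionBySet R M Q := by
      rw [Submodule.mem_torsionBySet_iff]
      rintro ⟨p, hp⟩
      simpa [hx, Submodule.mem_colon_singleton] using hp
    exact hQ.isPrime.ne_top (by simp_all)
  obtain ⟨y, hyT, hya⟩ := exists_mem_torsionBySet_notMem_smul_top ha hreg hT
  have hy : (Submodule.Quotient.mk y : QuotSMulTop a M) ≠ 0 := by
    rwa [Ne, Submodule.Quotient.mk_eq_zero]
  obtain ⟨Q', hQ', hle⟩ := exists_le_isAssociatedPrime_of_isNoetherianRing R _ hy
  refine ⟨Q', hQ', fun p hp ↦ hle ?_, hle ?_⟩ <;>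
    rw [Submodule.mem_colon_singleton, ← Submodule.Quotient.mk_smul, Submodule.mem_bot,
      Submodule.Quotient.mk_eq_zero]
  · rw [show p • y = 0 from (Submodule.mem_torsionBySet_iff _ _).mp hyT ⟨p, hp⟩]
    exact zero_mem _
  · exact Submodule.smul_mem_pointwise_smul y a ⊤ trivial

theorem length_le_ringKrullDim_quotient_of_isAssociatedPrime {rs : List R}
    (hrs : ∀ r ∈ rs, r ∈ maximalIdeal R) (hreg : IsRegular M rs) {Q : Ideal R}
    (hQ : IsAssociatedPrime Q M) : (rs.length : WithBot ℕ∞) ≤ ringKrullDim (R ⧸ Q) := by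
  have := hQ.isPrime
  induction rs generalizing M Q with
  | nil => exact ringKrullDim_nonneg_of_nontrivial
  | cons a rs ih =>
    obtain ⟨ha, hreg⟩ := (isRegular_cons_iff M a rs).mp hreg
    rw [List.forall_mem_cons] at hrs
    obtain ⟨Q', hQ', hle, haQ'⟩ := exists_isAssociatedPrime_quotSMulTop hrs.1 ha hQ
    have haQ : a ∉ Q := fun h ↦ (biUnion_associatedPrimes_eq_compl_regular R M).subset
      (Set.mem_biUnion hQ h) ha
    calc ((a :: rs).length : WithBot ℕ∞) = rs.length + 1 := by simp
      _ ≤ ringKrullDim (R ⧸ Q') + 1 := by gcongr; exact ih hrs.2 hreg hQ' hQ'.isPrime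
      _ ≤ ringKrullDim (R ⧸ Q) := by
        refine ringKrullDim_succ_le_of_surjective (Ideal.Quotient.factor hle)
          (Ideal.Quotient.factor_surjective hle) (r := Ideal.Quotient.mk Q a) ?_ ?_
        · rwa [mem_nonZeroDivisors_iff_ne_zero, Ne, Ideal.Quotient.eq_zero_iff_mem]
        · simpa [Ideal.Quotient.eq_zero_iff_mem] using haQ'

lemma ringKrullDim_le_length {S : Type*} [CommRing S] [IsNoetherianRing S] [IsLocalRing S]
    {fs : List S} (hfs : ∀ f ∈ fs, f ∈ maximalIdeal S)
    (hmax : ∀ p : Ideal S, p.IsPrime → (∀ f ∈ fs, f ∈ p) → p.IsMaximal) :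
    ringKrullDim S ≤ fs.length := by
  classical
  have hmin : maximalIdeal S ∈ (Ideal.span (fs.toFinset : Set S)).minimalPrimes := by
    refine ⟨⟨inferInstance, Ideal.span_le.mpr fun f hf ↦ hfs f (by simpa using hf)⟩, ?_⟩
    rintro p ⟨hp, hle⟩ -
    exact (eq_maximalIdeal (hmax p hp fun f hf ↦ hle (Ideal.subset_span (by simpa)))).ge
  rw [← maximalIdeal_height_eq_ringKrullDim, ← WithBot.coe_natCast, WithBot.coe_le_coe]
  exact (Ideal.height_le_card_of_mem_minimalPrimes_span_finset hmin).trans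
    (by exact_mod_cast fs.toFinset_card_le)

lemma ringKrullDim_quotient_le_length {Q : Ideal R} [Q.IsPrime] {fs : List R}
    (hfs : ∀ f ∈ fs, f ∈ maximalIdeal R)
    (hmax : ∀ p : Ideal R, p.IsPrime → Q ≤ p → (∀ f ∈ fs, f ∈ p) → p.IsMaximal) :
    ringKrullDim (R ⧸ Q) ≤ fs.length := by
  have : IsLocalRing (R ⧸ Q) :=
    .of_surjective' (Ideal.Quotient.mk Q) Ideal.Quotient.mk_surjective
  have : IsLocalHom (Ideal.Quotient.mk Q) := .of_surjective _ Ideal.Quotient.mk_surjective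
  rw [← List.length_map (Ideal.Quotient.mk Q)]
  refine ringKrullDim_le_length ?_ fun p hp hfp ↦ ?_
  · simpa [List.forall_mem_map] using hfs
  · have := hmax (p.comap (Ideal.Quotient.mk Q)) inferInstance
      (fun q hq ↦ by simp [Ideal.Quotient.eq_zero_iff_mem.mpr hq]) (by simpa using hfp)
    exact Ideal.isMaximal_of_isIntegral_of_isMaximal_comap' _
      (RingHom.isIntegral_of_surjective _ Ideal.Quotient.mk_surjective) p this

variable {R : Type u} [CommRing R] [IsNoetherianRing R] [IsLocalRing R]
  {M : Type u} [AddCommGroup M] [Module R M] [Module.Finite R M]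

-- By Rees' theorem, the length of a regular sequence is controlled by the vanishing of `Ext`.
lemma exists_isRegular_quotSMulTop {f : R} {rs : List R} {n : ℕ} (hlen : rs.length = n + 1)
    (hrs : ∀ r ∈ rs, r ∈ maximalIdeal R) (hreg : IsRegular M rs)
    (hf : f ∈ maximalIdeal R) (hfM : IsSMulRegular M f) :
    ∃ rs' : List R, rs'.length = n ∧ (∀ r ∈ rs', r ∈ maximalIdeal R) ∧
      IsRegular (QuotSMulTop f M) rs' := by
  have := hreg.nontrivial
  have : Nontrivial (QuotSMulTop f M) := Submodule.Quotient.nontrivial_iff.mpr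
    (Submodule.top_ne_pointwise_smul_of_mem_jacobson_annihilator
      (maximalIdeal_le_jacobson _ hf)).symm
  have hext := ((ModuleCat.exists_isRegular_tfae (maximalIdeal R) (n + 1) (ModuleCat.of R M)
    maximalIdeal_smul_top_lt).out 3 1 rfl rfl).mp ⟨rs, hlen, hrs, hreg⟩
  exact ((ModuleCat.exists_isRegular_tfae (maximalIdeal R) n (ModuleCat.of R (QuotSMulTop f M))
    maximalIdeal_smul_top_lt).out 1 3 rfl rfl).mp
      (subsingleton_ext_quotSMulTop _ (ModuleCat.of R M) hfM hext)

theorem isWeaklyRegular_of_isRegular {rs fs : List R} (hrs : ∀ r ∈ rs, r ∈ maximalIdeal R)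
    (hreg : IsRegular M rs) (hlen : fs.length = rs.length)
    (hfs : ∀ f ∈ fs, f ∈ maximalIdeal R)
    (hmax : ∀ p : Ideal R, p.IsPrime → Module.annihilator R M ≤ p → (∀ f ∈ fs, f ∈ p) →
      p.IsMaximal) : IsWeaklyRegular M fs := by
  induction fs generalizing M rs with
  | nil => simp
  | cons f fs ih =>
    have hfM : IsSMulRegular M f := by
      by_contra hcon
      obtain ⟨Q, hQ, hfQ⟩ := Set.mem_iUnion₂.mp
        ((biUnion_associatedPrimes_eq_compl_regular R M).superset hcon)
      have := hQ.isPrime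
      have hle : (rs.length : WithBot ℕ∞) ≤ fs.length :=
        (length_le_ringKrullDim_quotient_of_isAssociatedPrime hrs hreg hQ).trans
          (ringKrullDim_quotient_le_length (fun g hg ↦ hfs g (by simp [hg])) fun p hp hQp hfp ↦
            hmax p hp ((Submodule.annihilator_top.ge.trans hQ.annihilator_le).trans hQp)
              (List.forall_mem_cons.mpr ⟨hQp hfQ, hfp⟩))
      have : rs.length ≤ fs.length := by exact_mod_cast hle
      simp only [List.length_cons] at hlen
      lia
    rw [List.forall_mem_cons] at hfs
    obtain ⟨rs', hlen', hrs', hreg'⟩ := exists_isRegular_quotSMulTop hlen.symm hrs hreg hfs.1 hfM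
    rw [isWeaklyRegular_cons_iff]
    refine ⟨hfM, ih hrs' hreg' hlen'.symm hfs.2 fun p hp hann hfp ↦ ?_⟩
    refine hmax p hp ((LinearMap.annihilator_le_of_surjective _
      (Submodule.mkQ_surjective (f • (⊤ : Submodule R M)))).trans hann)
        (List.forall_mem_cons.mpr ⟨hann (Module.mem_annihilator.mpr fun m ↦ ?_), hfp⟩)
    obtain ⟨m, rfl⟩ := Submodule.mkQ_surjective _ m
    rw [← map_smul, Submodule.mkQ_apply, Submodule.Quotient.mk_eq_zero]
    exact Submodule.smul_mem_pointwise_smul m f ⊤ trivial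

end CohenMacaulay

section WeightedRegular

open RingTheory.Sequence

attribute [local instance] MvPolynomial.weightedGradedAlgebra

lemma isWeaklyRegular_append_singleton_iff {R : Type*} [CommRing R] (rs : List R) (r : R) :
    IsWeaklyRegular R (rs ++ [r]) ↔
      IsWeaklyRegular R rs ∧ ∀ a, r * a ∈ Ideal.ofList rs → a ∈ Ideal.ofList rs := by
  rw [isWeaklyRegular_append_iff, isWeaklyRegular_singleton_iff,
    isSMulRegular_quotient_iff_mem_of_smul_mem]
  simp only [smul_eq_mul, Ideal.mul_top]

lemma ofList_map_eq_span {ι R : Type*} [CommRing R] (f : ι → R) (l : List ι) :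
    Ideal.ofList (l.map f) = Ideal.span (f '' {i | i ∈ l}) := by
  rw [Ideal.ofList]
  congr 1
  ext
  simp

lemma ofList_map_univ_toList {ι R : Type*} [Fintype ι] [CommRing R] (f : ι → R) :
    Ideal.ofList (Finset.univ.toList.map f) = Ideal.span (Set.range f) := by
  simp [ofList_map_eq_span]

section CommRing

variable {σ K : Type*} [CommRing K]

lemma isWeaklyRegular_map_X {l : List σ} (hl : l.Nodup) :
    IsWeaklyRegular (MvPolynomial σ K) (l.map (X : σ → MvPolynomial σ K)) := by
  induction l using List.reverseRecOn with
  | nil => simp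
  | append_singleton l i ih =>
    rw [List.nodup_append_comm, List.singleton_append, List.nodup_cons] at hl
    rw [List.map_append, List.map_singleton, isWeaklyRegular_append_singleton_iff,
      ofList_map_eq_span]
    refine ⟨ih hl.2, fun a ha ↦ ?_⟩
    rw [mem_ideal_span_X_image] at ha ⊢
    intro m hm
    obtain ⟨j, hj, hjm⟩ := ha (m + Finsupp.single i 1) (by
      rwa [mem_support_iff, mul_comm, coeff_mul_X, ← mem_support_iff])
    have hij : i ≠ j := fun h ↦ hl.1 (h ▸ hj)
    exact ⟨j, hj, by simpa [Finsupp.single_apply, hij] using hjm⟩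

lemma mem_idealOfVars_iff {p : MvPolynomial σ K} :
    p ∈ idealOfVars σ K ↔ constantCoeff p = 0 := by
  rw [← pow_one (idealOfVars σ K), mem_pow_idealOfVars_iff']
  simp [constantCoeff_eq, Finsupp.degree_eq_zero_iff]

lemma mem_idealOfVars_of_isWeightedHomogeneous {w : σ → ℕ} {p : MvPolynomial σ K} {d : ℕ}
    (hp : IsWeightedHomogeneous w p d) (hd : d ≠ 0) : p ∈ idealOfVars σ K :=
  mem_idealOfVars_iff.mpr (hp.coeff_eq_zero 0 (by simpa using hd.symm))

lemma isHomogeneous_ofList {w : σ → ℕ} {fs : List (MvPolynomial σ K)}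
    (hfs : ∀ f ∈ fs, ∃ d, IsWeightedHomogeneous w f d) :
    (Ideal.ofList fs).IsHomogeneous (weightedHomogeneousSubmodule K w) :=
  Ideal.homogeneous_span _ _ hfs

lemma weightedHomogeneousComponent_mul_of_isWeightedHomogeneous {w : σ → ℕ}
    (a : MvPolynomial σ K) {b : MvPolynomial σ K} {e : ℕ} (hb : IsWeightedHomogeneous w b e)
    (d : ℕ) : weightedHomogeneousComponent w d (a * b) =
      if e ≤ d then weightedHomogeneousComponent w (d - e) a * b else 0 := by
  have h := DirectSum.coe_decompose_mul_of_right_mem (weightedHomogeneousSubmodule K w) (a := a)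
    (i := e) d hb
  simpa only [← weightedDecomposition.decompose'_apply] using! h

end CommRing

variable {σ K : Type*} [Field K] {w : σ → ℕ}

lemma mem_of_mul_mem_of_notMem_idealOfVars (hw : ∀ i, w i ≠ 0) {I : Ideal (MvPolynomial σ K)}
    (hI : I.IsHomogeneous (weightedHomogeneousSubmodule K w)) {s a : MvPolynomial σ K} {d : ℕ}
    (ha : IsWeightedHomogeneous w a d) (hs : s ∉ idealOfVars σ K) (h : s * a ∈ I) : a ∈ I := by
  rw [mem_idealOfVars_iff, constantCoeff_eq] at hs
  have h₁ := weightedHomogeneousComponent_mem_of_mem K w hI h d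
  rw [weightedHomogeneousComponent_mul_of_isWeightedHomogeneous s ha d, if_pos le_rfl,
    Nat.sub_self, weightedHomogeneousComponent_zero s hw] at h₁
  have h₂ := I.mul_mem_left (C (coeff 0 s)⁻¹) h₁
  rwa [← mul_assoc, ← C_mul, inv_mul_cancel₀ hs, C_1, one_mul] at h₂

lemma mem_of_mul_mem_of_forall_homogeneous {I : Ideal (MvPolynomial σ K)}
    (hI : I.IsHomogeneous (weightedHomogeneousSubmodule K w)) {f : MvPolynomial σ K} {e : ℕ}
    (hf : IsWeightedHomogeneous w f e)
    (hreg : ∀ a d, IsWeightedHomogeneous w a d → f * a ∈ I → a ∈ I)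
    {a : MvPolynomial σ K} (ha : f * a ∈ I) : a ∈ I := by
  rw [mem_iff_weightedHomogeneousComponent_mem K w hI]
  intro d
  refine hreg _ d (weightedHomogeneousComponent_isWeightedHomogeneous d a) ?_
  have h := weightedHomogeneousComponent_mem_of_mem K w hI ha (d + e)
  rwa [mul_comm, weightedHomogeneousComponent_mul_of_isWeightedHomogeneous a hf,
    if_pos (Nat.le_add_left e d), Nat.add_sub_cancel, mul_comm] at h

instance isPrime_idealOfVars : (idealOfVars σ K).IsPrime := by
  have : idealOfVars σ K = RingHom.ker (constantCoeff (R := K) (σ := σ)) := by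
    ext
    rw [mem_idealOfVars_iff, RingHom.mem_ker]
  exact this ▸ RingHom.ker_isPrime _

lemma isWeaklyRegular_of_isWeaklyRegular_localization (hw : ∀ i, w i ≠ 0)
    {fs : List (MvPolynomial σ K)} (hfs : ∀ f ∈ fs, ∃ d, IsWeightedHomogeneous w f d)
    {S : Type*} [CommRing S] [Algebra (MvPolynomial σ K) S]
    [IsLocalization.AtPrime S (idealOfVars σ K)]
    (hreg : IsWeaklyRegular S (fs.map (algebraMap (MvPolynomial σ K) S))) :
    IsWeaklyRegular (MvPolynomial σ K) fs := by
  induction fs using List.reverseRecOn with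
  | nil => simp
  | append_singleton fs f ih =>
    simp only [List.forall_mem_append, List.forall_mem_singleton] at hfs
    obtain ⟨hfs, e, hf⟩ := hfs
    have hI := isHomogeneous_ofList hfs
    rw [List.map_append, List.map_singleton, isWeaklyRegular_append_singleton_iff,
      ← Ideal.map_ofList] at hreg
    refine (isWeaklyRegular_append_singleton_iff _ _).mpr ⟨ih hfs hreg.1, fun a ↦
      mem_of_mul_mem_of_forall_homogeneous hI hf fun a d ha hfa ↦ ?_⟩
    have hloc := hreg.2 (algebraMap _ S a) (by
      rw [← map_mul]
      exact Ideal.mem_map_of_mem _ hfa)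
    obtain ⟨s, hs, hsa⟩ := (IsLocalization.algebraMap_mem_map_algebraMap_iff
      (idealOfVars σ K).primeCompl S _ _).mp hloc
    exact mem_of_mul_mem_of_notMem_idealOfVars hw hI ha hs hsa

theorem isWeaklyRegular_of_idealOfVars_le_radical [Fintype σ] (hw : ∀ i, w i ≠ 0)
    {fs : List (MvPolynomial σ K)} (hlen : fs.length = Fintype.card σ)
    (hfs : ∀ f ∈ fs, ∃ d ≠ 0, IsWeightedHomogeneous w f d)
    (hrad : idealOfVars σ K ≤ (Ideal.ofList fs).radical) :
    IsWeaklyRegular (MvPolynomial σ K) fs := by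
  let m := idealOfVars σ K
  let S := Localization.AtPrime m
  have : IsNoetherianRing S := IsLocalization.isNoetherianRing m.primeCompl S inferInstance
  have hX : ∀ p ∈ Finset.univ.toList.map (X : σ → MvPolynomial σ K), p ∈ m := by
    simpa using fun i ↦ show X i ∈ m from Ideal.subset_span (Set.mem_range_self i)
  have hfm : ∀ f ∈ fs, f ∈ m := fun f hf ↦
    let ⟨_, hd, hfd⟩ := hfs f hf
    mem_idealOfVars_of_isWeightedHomogeneous hfd hd
  have hmem (l : List (MvPolynomial σ K)) (hl : ∀ p ∈ l, p ∈ m) :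
      ∀ s ∈ l.map (algebraMap _ S), s ∈ IsLocalRing.maximalIdeal S := by
    rw [List.forall_mem_map]
    exact fun p hp ↦ (IsLocalization.AtPrime.to_map_mem_maximal_iff S m p).mpr (hl p hp)
  refine isWeaklyRegular_of_isWeaklyRegular_localization hw
    (fun f hf ↦ (hfs f hf).imp fun _ ↦ And.right) (S := S) ?_
  refine isWeaklyRegular_of_isRegular (hmem _ hX)
    ((isWeaklyRegular_map_X Finset.univ.nodup_toList).isRegular_of_isLocalization_of_mem S m hX)
    (by simp [hlen]) (hmem _ hfm) fun Q hQ _ hfQ ↦ ?_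
  have hle : m ≤ Q.comap (algebraMap _ S) := hrad.trans <|
    (Ideal.IsPrime.comap (hK := hQ) _).radical_le_iff.mpr <| Ideal.span_le.mpr fun f hf ↦
      hfQ _ (List.mem_map_of_mem hf)
  rw [← Ideal.map_le_iff_le_comap, IsLocalization.AtPrime.map_eq_maximalIdeal m S] at hle
  exact (IsLocalRing.maximalIdeal.isMaximal S).eq_of_le hQ.ne_top hle ▸ inferInstance

end WeightedRegular

section HilbertSeries

open RingTheory.Sequence

attribute [local instance] MvPolynomial.weightedGradedAlgebra

lemma eval_one_mul_prod_of_mul_prod_one_sub_X_pow {ι R : Type*} [Fintype ι] [CommRing R]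
    [IsDomain R] {p : Polynomial R} {w e : ι → ℕ}
    (h : p * ∏ i, (1 - Polynomial.X ^ w i) = ∏ i, (1 - Polynomial.X ^ e i)) :
    p.eval 1 * ∏ i, (w i : R) = ∏ i, (e i : R) := by
  have hprod (r : ι → ℕ) : ∏ i, (1 - Polynomial.X ^ r i : Polynomial R) =
      (1 - Polynomial.X) ^ Fintype.card ι * ∏ i, ∑ j ∈ Finset.range (r i), Polynomial.X ^ j := by
    simp_rw [← mul_neg_geom_sum, Finset.prod_mul_distrib, Finset.prod_const, Finset.card_univ]
  have hne : (1 - Polynomial.X : Polynomial R) ^ Fintype.card ι ≠ 0 :=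
    pow_ne_zero _ (sub_ne_zero.mpr (Polynomial.X_ne_C 1).symm)
  rw [hprod, hprod, mul_left_comm] at h
  simpa [Polynomial.eval_prod, Polynomial.eval_finsetSum] using
    congrArg (Polynomial.eval 1) (mul_left_cancel₀ hne h)

lemma finrank_map_add_finrank_inf_ker {K V V' : Type*} [DivisionRing K] [AddCommGroup V]
    [Module K V] [AddCommGroup V'] [Module K V'] (q : V →ₗ[K] V') (U : Submodule K V)
    [FiniteDimensional K U] :
    Module.finrank K (U.map q) + Module.finrank K (U ⊓ LinearMap.ker q : Submodule K V) =
      Module.finrank K U := by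
  rw [← LinearMap.finrank_range_add_finrank_ker (q.domRestrict U), LinearMap.range_domRestrict,
    LinearMap.ker_domRestrict, ← Submodule.map_comap_subtype]
  congr 1
  exact (Submodule.equivMapOfInjective U.subtype U.injective_subtype _).finrank_eq.symm

variable {σ K : Type*} [Field K] (w : σ → ℕ) (I : Ideal (MvPolynomial σ K))

/-- The degree `d` part of `K[X]/I`: the classes of the forms of weighted degree `d`. -/
noncomputable def quotientGradedPiece (d : ℕ) : Submodule K (MvPolynomial σ K ⧸ I) :=
  (weightedHomogeneousSubmodule K w d).map (Ideal.Quotient.mkₐ K I).toLinearMap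

/-- The Hilbert series of `K[X]/I` for the grading by weighted degree. It is meaningful when the
weights are positive, so that the graded pieces are finite-dimensional. -/
noncomputable def quotientHilbertSeries : PowerSeries ℤ :=
  PowerSeries.mk fun d ↦ (Module.finrank K (quotientGradedPiece w I d) : ℤ)

variable {w I}

lemma mk_mem_quotientGradedPiece {a : MvPolynomial σ K} {d : ℕ}
    (ha : IsWeightedHomogeneous w a d) : Ideal.Quotient.mk I a ∈ quotientGradedPiece w I d :=
  Submodule.mem_map_of_mem ha

lemma finiteDimensional_quotientGradedPiece [Finite σ] (hw : ∀ i, w i ≠ 0) (d : ℕ) :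
    FiniteDimensional K (quotientGradedPiece w I d) :=
  Module.Finite.iff_fg.mpr ((weightedHomogeneousSubmodule_fg K w hw d).map _)

lemma quotientGradedPiece_eq_bot {d : ℕ} (h : ∀ a, IsWeightedHomogeneous w a d → a ∈ I) :
    quotientGradedPiece w I d = ⊥ := by
  rw [eq_bot_iff, quotientGradedPiece, Submodule.map_le_iff_le_comap]
  exact fun a ha ↦ Ideal.Quotient.eq_zero_iff_mem.mpr (h a ha)

lemma map_factor_quotientGradedPiece {J : Ideal (MvPolynomial σ K)} (hIJ : I ≤ J) (d : ℕ) :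
    (quotientGradedPiece w I d).map (Ideal.Quotient.factorₐ K hIJ).toLinearMap =
      quotientGradedPiece w J d := by
  rw [quotientGradedPiece, ← Submodule.map_comp]
  rfl

lemma sub_weightedHomogeneousComponent_mul_mem
    (hI : I.IsHomogeneous (weightedHomogeneousSubmodule K w)) {f a b : MvPolynomial σ K}
    {d e : ℕ} (hf : IsWeightedHomogeneous w f e) (ha : IsWeightedHomogeneous w a d)
    (h : a - b * f ∈ I) :
    (a - if e ≤ d then weightedHomogeneousComponent w (d - e) b * f else 0) ∈ I := by
  have h' := weightedHomogeneousComponent_mem_of_mem K w hI h d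
  rwa [map_sub, ha.weightedHomogeneousComponent_same,
    weightedHomogeneousComponent_mul_of_isWeightedHomogeneous b hf] at h'

lemma quotientGradedPiece_inf_ker_factor
    (hI : I.IsHomogeneous (weightedHomogeneousSubmodule K w)) {f : MvPolynomial σ K} {e : ℕ}
    (hf : IsWeightedHomogeneous w f e) (d : ℕ) :
    quotientGradedPiece w I d ⊓ LinearMap.ker (Ideal.Quotient.factorₐ K
        (le_sup_left : I ≤ I ⊔ Ideal.span {f})).toLinearMap =
      if e ≤ d then (quotientGradedPiece w I (d - e)).map
        (LinearMap.mulRight K (Ideal.Quotient.mk I f)) else ⊥ := by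
  apply le_antisymm
  · rintro _ ⟨⟨a, ha, rfl⟩, hk⟩
    obtain ⟨y, hy, z, hz, rfl⟩ := Submodule.mem_sup.mp (Ideal.Quotient.eq_zero_iff_mem.mp hk)
    obtain ⟨b, rfl⟩ := Ideal.mem_span_singleton'.mp hz
    have h := sub_weightedHomogeneousComponent_mul_mem hI hf ha (b := b) (by simpa using hy)
    have h' := Ideal.Quotient.eq.mpr h
    split_ifs at h' ⊢
    · exact ⟨_, mk_mem_quotientGradedPiece
        (weightedHomogeneousComponent_isWeightedHomogeneous _ b), h'.symm⟩
    · exact h'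
  · split_ifs with hed
    · rintro _ ⟨_, ⟨a, ha, rfl⟩, rfl⟩
      refine ⟨mk_mem_quotientGradedPiece (Nat.sub_add_cancel hed ▸ ha.mul hf), ?_⟩
      exact Ideal.Quotient.eq_zero_iff_mem.mpr
        (Ideal.mul_mem_left _ a (Ideal.mem_sup_right (Ideal.mem_span_singleton_self f)))
    · exact bot_le

lemma finrank_quotientGradedPiece_sup_span_singleton [Finite σ] (hw : ∀ i, w i ≠ 0)
    (hI : I.IsHomogeneous (weightedHomogeneousSubmodule K w)) {f : MvPolynomial σ K} {e : ℕ}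
    (hf : IsWeightedHomogeneous w f e) (hreg : ∀ a, f * a ∈ I → a ∈ I) (d : ℕ) :
    Module.finrank K (quotientGradedPiece w (I ⊔ Ideal.span {f}) d) +
        (if e ≤ d then Module.finrank K (quotientGradedPiece w I (d - e)) else 0) =
      Module.finrank K (quotientGradedPiece w I d) := by
  have := finiteDimensional_quotientGradedPiece (I := I) hw
  have hinj : Function.Injective (LinearMap.mulRight K (Ideal.Quotient.mk I f)) := by
    refine (injective_iff_map_eq_zero _).mpr fun x hx ↦ ?_
    obtain ⟨a, rfl⟩ := Ideal.Quotient.mk_surjective x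
    rw [LinearMap.mulRight_apply, ← map_mul, mul_comm] at hx
    exact Ideal.Quotient.eq_zero_iff_mem.mpr (hreg a (Ideal.Quotient.eq_zero_iff_mem.mp hx))
  rw [← finrank_map_add_finrank_inf_ker (Ideal.Quotient.factorₐ K
      (le_sup_left : I ≤ I ⊔ Ideal.span {f})).toLinearMap (quotientGradedPiece w I d),
    map_factor_quotientGradedPiece, quotientGradedPiece_inf_ker_factor hI hf]
  split_ifs with hed
  · rw [if_pos hed,
      (Submodule.equivMapOfInjective _ hinj (quotientGradedPiece w I (d - e))).finrank_eq]
  · rw [if_neg hed, finrank_bot]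

lemma quotientHilbertSeries_sup_span_singleton [Finite σ] (hw : ∀ i, w i ≠ 0)
    (hI : I.IsHomogeneous (weightedHomogeneousSubmodule K w)) {f : MvPolynomial σ K} {e : ℕ}
    (hf : IsWeightedHomogeneous w f e) (hreg : ∀ a, f * a ∈ I → a ∈ I) :
    quotientHilbertSeries w (I ⊔ Ideal.span {f}) =
      quotientHilbertSeries w I * (1 - PowerSeries.X ^ e) := by
  ext d
  rw [mul_sub, mul_one, map_sub, PowerSeries.coeff_mul_X_pow']
  simp only [quotientHilbertSeries, PowerSeries.coeff_mk]
  rw [← finrank_quotientGradedPiece_sup_span_singleton hw hI hf hreg d]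
  push_cast
  exact (add_sub_cancel_right _ _).symm

lemma quotientHilbertSeries_ofList [Finite σ] (hw : ∀ i, w i ≠ 0) {ι : Type*}
    {f : ι → MvPolynomial σ K} {e : ι → ℕ} (hf : ∀ i, IsWeightedHomogeneous w (f i) (e i))
    {l : List ι} (hreg : IsWeaklyRegular (MvPolynomial σ K) (l.map f)) :
    quotientHilbertSeries w (Ideal.ofList (l.map f)) =
      quotientHilbertSeries w (⊥ : Ideal (MvPolynomial σ K)) *
        (l.map fun i ↦ 1 - PowerSeries.X ^ e i).prod := by
  induction l using List.reverseRecOn with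
  | nil => simp
  | append_singleton l i ih =>
    simp only [List.map_append, List.map_singleton, isWeaklyRegular_append_singleton_iff] at hreg
    have hI : (Ideal.ofList (l.map f)).IsHomogeneous (weightedHomogeneousSubmodule K w) :=
      isHomogeneous_ofList (List.forall_mem_map.mpr fun i _ ↦ ⟨e i, hf i⟩)
    simp only [List.map_append, List.map_singleton, Ideal.ofList_append, Ideal.ofList_singleton,
      List.prod_append, List.prod_singleton]
    rw [quotientHilbertSeries_sup_span_singleton hw hI (hf i) hreg.2, ih hreg.1, mul_assoc]

lemma quotientHilbertSeries_idealOfVars (hw : ∀ i, w i ≠ 0) :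
    quotientHilbertSeries w (idealOfVars σ K) = 1 := by
  ext d
  rw [quotientHilbertSeries, PowerSeries.coeff_mk, PowerSeries.coeff_one]
  split_ifs with hd
  · have h : quotientGradedPiece w (idealOfVars σ K) 0 = Submodule.span K {1} := by
      apply le_antisymm
      · rintro _ ⟨a, ha, rfl⟩
        rw [← ha.weightedHomogeneousComponent_same, weightedHomogeneousComponent_zero a hw]
        exact Submodule.mem_span_singleton.mpr
          ⟨coeff 0 a, (Algebra.algebraMap_eq_smul_one _).symm⟩
      · rw [Submodule.span_singleton_le_iff_mem, ← map_one (Ideal.Quotient.mk _)]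
        exact mk_mem_quotientGradedPiece (isWeightedHomogeneous_one K w)
    rw [hd, h, finrank_span_singleton one_ne_zero, Nat.cast_one]
  · rw [quotientGradedPiece_eq_bot fun a ha ↦ mem_idealOfVars_of_isWeightedHomogeneous ha hd,
      finrank_bot, Nat.cast_zero]

lemma exists_forall_quotientGradedPiece_eq_bot [Finite σ]
    (h : idealOfVars σ K ≤ I.radical) : ∃ D, ∀ d, D ≤ d → quotientGradedPiece w I d = ⊥ := by
  have := Fintype.ofFinite σ
  obtain ⟨N, hN⟩ := Ideal.exists_pow_le_of_le_radical_of_fg h (idealOfVars_fg σ K)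
  refine ⟨N * ∑ i, w i + 1, fun d hd ↦ quotientGradedPiece_eq_bot fun a ha ↦ hN ?_⟩
  refine (mem_pow_idealOfVars_iff' N a).mpr fun m hm ↦ ha.coeff_eq_zero m (ne_of_lt ?_)
  have hle : Finsupp.weight w m ≤ N * ∑ i, w i := by
    rw [Finsupp.weight_eq_sum, Finset.mul_sum]
    exact Finset.sum_le_sum fun i _ ↦
      Nat.mul_le_mul_right _ ((Finsupp.le_degree i m).trans hm.le)
  exact hle.trans_lt hd

lemma iSupIndep_quotientGradedPiece
    (hI : I.IsHomogeneous (weightedHomogeneousSubmodule K w)) :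
    iSupIndep (quotientGradedPiece w I) := by
  intro d
  let π : (MvPolynomial σ K ⧸ I) →ₗ[K] (MvPolynomial σ K ⧸ I) :=
    (I.restrictScalars K).mapQ (I.restrictScalars K) (weightedHomogeneousComponent w d)
      fun a ha ↦ weightedHomogeneousComponent_mem_of_mem K w hI ha d
  have hπ (a) : π (Ideal.Quotient.mk I a) =
    Ideal.Quotient.mk I (weightedHomogeneousComponent w d a) := rfl
  have hker : ⨆ j ≠ d, quotientGradedPiece w I j ≤ LinearMap.ker π := by
    refine iSup₂_le fun j hj ↦ ?_
    rintro _ ⟨a, ha, rfl⟩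
    exact (hπ a).trans (by rw [ha.weightedHomogeneousComponent_ne d hj.symm, map_zero])
  refine Submodule.disjoint_def.mpr ?_
  rintro _ ⟨a, ha, rfl⟩ ha'
  have h := (hπ a).symm.trans (hker ha')
  rwa [ha.weightedHomogeneousComponent_same] at h

lemma iSup_quotientGradedPiece : ⨆ d, quotientGradedPiece w I d = ⊤ := by
  rw [eq_top_iff]
  rintro x -
  obtain ⟨a, rfl⟩ := Ideal.Quotient.mk_surjective x
  rw [← sum_weightedHomogeneousComponent w a,
    finsum_eq_sum _ (weightedHomogeneousComponent_finsupp a), map_sum]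
  exact Submodule.sum_mem _ fun d _ ↦ Submodule.mem_iSup_of_mem d
    (mk_mem_quotientGradedPiece (weightedHomogeneousComponent_isWeightedHomogeneous d a))

lemma finrank_quotient_eq_sum_quotientGradedPiece [Finite σ] (hw : ∀ i, w i ≠ 0)
    (hI : I.IsHomogeneous (weightedHomogeneousSubmodule K w)) {D : ℕ}
    (hD : ∀ d, D ≤ d → quotientGradedPiece w I d = ⊥) :
    Module.finrank K (MvPolynomial σ K ⧸ I) =
      ∑ d ∈ Finset.range D, Module.finrank K (quotientGradedPiece w I d) := by
  have := finiteDimensional_quotientGradedPiece (I := I) hw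
  have htop : ⨆ d : Fin D, quotientGradedPiece w I d = ⊤ := by
    rw [eq_top_iff, ← iSup_quotientGradedPiece (w := w)]
    refine iSup_le fun d ↦ ?_
    by_cases hd : d < D
    · exact le_iSup (fun d : Fin D ↦ quotientGradedPiece w I d) ⟨d, hd⟩
    · exact (hD d (not_lt.mp hd)).trans_le bot_le
  have hint := DirectSum.isInternal_submodule_of_iSupIndep_of_iSup_eq_top
    ((iSupIndep_quotientGradedPiece hI).comp Fin.val_injective) htop
  have (d : Fin D) : FiniteDimensional K ((quotientGradedPiece w I ∘ Fin.val) d) := this d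
  have heq := (LinearEquiv.ofBijective (DirectSum.coeLinearMap _) hint).finrank_eq
  rw [← heq, Module.finrank_directSum, Finset.sum_range]
  rfl

lemma exists_polynomial_coe_eq_quotientHilbertSeries [Finite σ] (hw : ∀ i, w i ≠ 0)
    (hI : I.IsHomogeneous (weightedHomogeneousSubmodule K w))
    (h : idealOfVars σ K ≤ I.radical) :
    ∃ p : Polynomial ℤ, (p : PowerSeries ℤ) = quotientHilbertSeries w I ∧
      p.eval 1 = Module.finrank K (MvPolynomial σ K ⧸ I) := by
  obtain ⟨D, hD⟩ := exists_forall_quotientGradedPiece_eq_bot (w := w) h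
  refine ⟨(quotientHilbertSeries w I).trunc D, ?_, ?_⟩
  · ext d
    rw [Polynomial.coeff_coe, PowerSeries.coeff_trunc, ite_eq_left_iff, not_lt]
    intro hd
    rw [quotientHilbertSeries, PowerSeries.coeff_mk, hD d hd, finrank_bot, Nat.cast_zero]
  · rw [finrank_quotient_eq_sum_quotientGradedPiece hw hI hD, Polynomial.eval,
      PowerSeries.eval₂_trunc_eq_sum_range]
    simp [quotientHilbertSeries]

/-- Weighted Bézout: the dimension is the value at `s = 1` of the Hilbert series
`∏ (1 - s ^ e i) / ∏ (1 - s ^ w i)`. -/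
theorem finrank_quotient_mul_prod_weights [Fintype σ] (hw : ∀ i, w i ≠ 0)
    {f : σ → MvPolynomial σ K} {e : σ → ℕ} (he : ∀ i, e i ≠ 0)
    (hf : ∀ i, IsWeightedHomogeneous w (f i) (e i))
    (hrad : idealOfVars σ K ≤ (Ideal.span (Set.range f)).radical) :
    Module.finrank K (MvPolynomial σ K ⧸ Ideal.span (Set.range f)) * ∏ i, w i = ∏ i, e i := by
  have hI : (Ideal.span (Set.range f)).IsHomogeneous (weightedHomogeneousSubmodule K w) :=
    Ideal.homogeneous_span _ _ (Set.forall_mem_range.mpr fun i ↦ ⟨e i, hf i⟩)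
  have hvars := quotientHilbertSeries_ofList hw (isWeightedHomogeneous_X K w)
    (isWeaklyRegular_map_X (σ := σ) (K := K) Finset.univ.nodup_toList)
  have hrel := quotientHilbertSeries_ofList hw hf (l := Finset.univ.toList)
    (isWeaklyRegular_of_idealOfVars_le_radical hw (by simp)
      (List.forall_mem_map.mpr fun i _ ↦ ⟨e i, he i, hf i⟩) (by rwa [ofList_map_univ_toList]))
  rw [ofList_map_univ_toList, Finset.prod_map_toList] at hvars hrel
  rw [← idealOfVars, quotientHilbertSeries_idealOfVars hw] at hvars
  obtain ⟨p, hp, hp1⟩ := exists_polynomial_coe_eq_quotientHilbertSeries hw hI hrad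
  have hprod (r : σ → ℕ) : ((∏ i, (1 - Polynomial.X ^ r i) : Polynomial ℤ) : PowerSeries ℤ) =
      ∏ i, (1 - PowerSeries.X ^ r i) := by
    rw [← Polynomial.coeToPowerSeries.ringHom_apply, map_prod]
    simp
  have h : p * ∏ i, (1 - Polynomial.X ^ w i) = ∏ i, (1 - Polynomial.X ^ e i) := by
    apply Polynomial.coe_injective
    rw [Polynomial.coe_mul, hprod, hprod, hp, hrel, mul_right_comm, ← hvars, one_mul]
  have h1 := eval_one_mul_prod_of_mul_prod_one_sub_X_pow h
  rw [hp1] at h1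
  exact_mod_cast h1

end HilbertSeries

section FreeOfFibers

open scoped TensorProduct

variable {R M : Type*} [CommRing R] [IsDomain R] [AddCommGroup M] [Module R M]
  [Module.Finite R M]

lemma notMem_support_bot_of_isTorsion (hM : Module.IsTorsion R M) :
    (⊥ : PrimeSpectrum R) ∉ Module.support R M := by
  rw [Module.mem_support_iff_of_finite]
  intro h
  obtain ⟨r, hr, hr0⟩ := Submodule.annihilator_top_inter_nonZeroDivisors hM
  rw [Submodule.annihilator_top] at hr
  exact nonZeroDivisors.ne_zero hr0 (h hr)

lemma finrank_tensor_torsion_add_finrank [IsPrincipalIdealRing R] (K : Type*) [Field K]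
    [Algebra R K] :
    Module.finrank K (K ⊗[R] Submodule.torsion R M) +
      Module.finrank R (M ⧸ Submodule.torsion R M) = Module.finrank K (K ⊗[R] M) := by
  obtain ⟨s, hs⟩ := Module.projective_lifting_property _ LinearMap.id
    (Submodule.torsion R M).mkQ_surjective
  let e := lequivProdOfRightSplitExact (Submodule.torsion R M).injective_subtype
    (by rw [Submodule.range_subtype, Submodule.ker_mkQ]) hs
  rw [← (LinearEquiv.baseChange R K _ _ e).finrank_eq,
    (TensorProduct.prodRight R K K _ _).finrank_eq, Module.finrank_prod,
    Module.finrank_baseChange (M' := M ⧸ Submodule.torsion R M)]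

theorem free_and_finrank_eq_of_finrank_fiber_eq [IsPrincipalIdealRing R] {N : ℕ}
    (h : ∀ p : PrimeSpectrum R,
      Module.finrank p.asIdeal.ResidueField (p.asIdeal.ResidueField ⊗[R] M) = N) :
    Module.Free R M ∧ Module.finrank R M = N := by
  have hfib (p : PrimeSpectrum R) := (finrank_tensor_torsion_add_finrank (M := M)
    p.asIdeal.ResidueField).trans (h p)
  have hsupp (p : PrimeSpectrum R) : p ∉ Module.support R (Submodule.torsion R M) ↔
      Module.finrank p.asIdeal.ResidueField
        (p.asIdeal.ResidueField ⊗[R] Submodule.torsion R M) = 0 := by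
    rw [Module.mem_support_iff_nontrivial_residueField_tensorProduct,
      not_nontrivial_iff_subsingleton, Module.finrank_zero_iff]
  have hrank : Module.finrank R (M ⧸ Submodule.torsion R M) = N := by
    rw [← hfib ⊥, (hsupp ⊥).mp (notMem_support_bot_of_isTorsion Submodule.torsion_isTorsion),
      zero_add]
  have htors : Submodule.torsion R M = ⊥ := by
    rw [← Submodule.subsingleton_iff_eq_bot, ← Module.support_eq_empty_iff (R := R),
      Set.eq_empty_iff_forall_notMem]
    intro p
    have := hfib p
    exact (hsupp p).mpr (by omega)
  let e := Submodule.quotEquivOfEqBot _ htors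
  exact ⟨Module.Free.of_equiv e, e.finrank_eq ▸ hrank⟩

end FreeOfFibers

section CompleteIntersection

open scoped TensorProduct

lemma finite_quotient_of_idealOfVars_le_radical {σ R : Type*} [Finite σ] [CommRing R]
    {I : Ideal (MvPolynomial σ R)} (h : idealOfVars σ R ≤ I.radical) :
    Module.Finite R (MvPolynomial σ R ⧸ I) := by
  have hint (i : σ) : IsIntegral R (Ideal.Quotient.mk I (X i)) := by
    obtain ⟨n, hn⟩ := h (Ideal.subset_span (Set.mem_range_self i))
    refine ⟨Polynomial.X ^ n, Polynomial.monic_X_pow n, ?_⟩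
    rwa [Polynomial.eval₂_X_pow, ← map_pow, Ideal.Quotient.eq_zero_iff_mem]
  have htop : Algebra.adjoin R (Set.range fun i ↦ Ideal.Quotient.mk I (X i)) = ⊤ := by
    rw [← (AlgHom.range_eq_top _).mpr (Ideal.Quotient.mkₐ_surjective R I), ← Algebra.map_top,
      ← adjoin_range_X, AlgHom.map_adjoin, ← Set.range_comp]
    rfl
  have hfg := fg_adjoin_of_finite (Set.finite_range _) (Set.forall_mem_range.mpr hint)
  rw [htop] at hfg
  exact ⟨hfg⟩

/-- Reduction of the coefficients of a quotient of a polynomial ring. -/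
noncomputable def tensorQuotientEquivQuotientMap {σ R : Type*} [CommRing R] (K : Type*)
    [CommRing K] [Algebra R K] (I : Ideal (MvPolynomial σ R)) :
    K ⊗[R] (MvPolynomial σ R ⧸ I) ≃ₐ[K]
      MvPolynomial σ K ⧸ I.map (MvPolynomial.map (algebraMap R K)) :=
  (Algebra.TensorProduct.tensorQuotientEquiv K (MvPolynomial σ R) K I).trans <|
    Ideal.quotientEquivAlg _ _ (algebraTensorAlgEquiv R K) <| by
      have hcomp : (algebraTensorAlgEquiv (σ := σ) R K : K ⊗[R] MvPolynomial σ R →+* _).comp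
          (Algebra.TensorProduct.includeRight : MvPolynomial σ R →ₐ[R] _).toRingHom =
          MvPolynomial.map (algebraMap R K) := by
        ext p <;> simp
      rw [← hcomp, ← Ideal.map_map]
      rfl

lemma isWeightedHomogeneous_map {σ R S : Type*} [CommSemiring R] [CommSemiring S] (φ : R →+* S)
    {w : σ → ℕ} {p : MvPolynomial σ R} {d : ℕ} (hp : IsWeightedHomogeneous w p d) :
    IsWeightedHomogeneous w (MvPolynomial.map φ p) d := by
  intro m hm
  rw [coeff_map] at hm
  exact hp (ne_zero_of_map hm)

variable {σ : Type*} [Fintype σ] {R : Type*} [CommRing R] {w e : σ → ℕ}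
  {f : σ → MvPolynomial σ R}

lemma finrank_tensor_quotient_mul_prod_weights (K : Type*) [Field K] [Algebra R K]
    (hw : ∀ i, w i ≠ 0) (he : ∀ i, e i ≠ 0) (hf : ∀ i, IsWeightedHomogeneous w (f i) (e i))
    (hrad : idealOfVars σ R ≤ (Ideal.span (Set.range f)).radical) :
    Module.finrank K (K ⊗[R] (MvPolynomial σ R ⧸ Ideal.span (Set.range f))) * ∏ i, w i =
      ∏ i, e i := by
  have hmap : (Ideal.span (Set.range f)).map (MvPolynomial.map (algebraMap R K)) =
      Ideal.span (Set.range fun i ↦ MvPolynomial.map (algebraMap R K) (f i)) := by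
    rw [Ideal.map_span, ← Set.range_comp]
    rfl
  have hvars : (idealOfVars σ R).map (MvPolynomial.map (algebraMap R K)) = idealOfVars σ K := by
    simp [idealOfVars, Ideal.map_span, ← Set.range_comp, Function.comp_def]
  rw [(tensorQuotientEquivQuotientMap K (Ideal.span (Set.range f))).toLinearEquiv.finrank_eq,
    hmap]
  refine finrank_quotient_mul_prod_weights hw he
    (fun i ↦ isWeightedHomogeneous_map (algebraMap R K) (hf i)) ?_
  rw [← hmap, ← hvars]
  exact (Ideal.map_mono hrad).trans (Ideal.map_radical_le _)

theorem free_and_finrank_quotient_mul_prod_weights [IsDomain R] [IsPrincipalIdealRing R]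
    (hw : ∀ i, w i ≠ 0) (he : ∀ i, e i ≠ 0) (hf : ∀ i, IsWeightedHomogeneous w (f i) (e i))
    (hrad : idealOfVars σ R ≤ (Ideal.span (Set.range f)).radical) :
    Module.Free R (MvPolynomial σ R ⧸ Ideal.span (Set.range f)) ∧
      Module.finrank R (MvPolynomial σ R ⧸ Ideal.span (Set.range f)) * ∏ i, w i = ∏ i, e i := by
  have := finite_quotient_of_idealOfVars_le_radical hrad
  have hfib (p : PrimeSpectrum R) := finrank_tensor_quotient_mul_prod_weights
    p.asIdeal.ResidueField hw he hf hrad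
  have hpos : 0 < ∏ i, w i := Finset.prod_pos fun i _ ↦ Nat.pos_of_ne_zero (hw i)
  obtain ⟨hfree, hrank⟩ := free_and_finrank_eq_of_finrank_fiber_eq fun p ↦
    Nat.eq_div_of_mul_eq_left hpos.ne' (hfib p)
  exact ⟨hfree, hrank ▸ Nat.div_mul_cancel (Dvd.intro_left _ (hfib ⊥))⟩

end CompleteIntersection

section Homogeneity

variable {σ R : Type*} [CommRing R]

/-- The substitution `X i ↦ X i * s ^ w i` into polynomials in a new variable `s`, which detects
weighted homogeneity. -/
noncomputable def weightScaling (w : σ → ℕ) :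
    MvPolynomial σ R →ₐ[R] Polynomial (MvPolynomial σ R) :=
  aeval fun i ↦ Polynomial.C (X i) * Polynomial.X ^ w i

lemma weightScaling_monomial (w : σ → ℕ) (m : σ →₀ ℕ) (r : R) :
    weightScaling w (monomial m r) =
      Polynomial.monomial (Finsupp.weight w m) (monomial m r) := by
  have hprod : (m.prod fun i k ↦ (Polynomial.C (X i : MvPolynomial σ R) * Polynomial.X ^ w i) ^ k) =
      Polynomial.C (m.prod fun i k ↦ X i ^ k) * Polynomial.X ^ Finsupp.weight w m := by
    simp only [mul_pow, Finsupp.prod_mul, map_finsuppProd, map_pow, Finsupp.weight_apply,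
      Finsupp.sum, smul_eq_mul, ← Finset.prod_pow_eq_pow_sum, ← pow_mul, mul_comm (w _)]
    rfl
  rw [weightScaling, aeval_monomial, hprod, monomial_eq, ← Polynomial.C_mul_X_pow_eq_monomial,
    Polynomial.C_mul, mul_assoc]
  rfl

lemma coeff_weightScaling (w : σ → ℕ) (p : MvPolynomial σ R) (d : ℕ) :
    (weightScaling w p).coeff d = weightedHomogeneousComponent w d p := by
  classical
  induction p using MvPolynomial.induction_on' with
  | monomial m r =>
    rw [weightScaling_monomial, Polynomial.coeff_monomial,
      weightedHomogeneousComponent_of_mem (isWeightedHomogeneous_monomial w m r rfl)]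
    simp only [eq_comm]
  | add p q hp hq => rw [map_add, map_add, Polynomial.coeff_add, hp, hq]

lemma isWeightedHomogeneous_iff_weightScaling {w : σ → ℕ} {p : MvPolynomial σ R} {d : ℕ} :
    IsWeightedHomogeneous w p d ↔ weightScaling w p = Polynomial.C p * Polynomial.X ^ d := by
  classical
  constructor
  · intro hp
    ext1 k
    rw [coeff_weightScaling, weightedHomogeneousComponent_of_mem hp, Polynomial.coeff_C_mul_X_pow]
  · intro h
    have hd := coeff_weightScaling w p d
    rw [h, Polynomial.coeff_C_mul_X_pow, if_pos rfl] at hd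
    exact hd ▸ weightedHomogeneousComponent_isWeightedHomogeneous d p

end Homogeneity

namespace E8T

/-- The degrees of the sixteen variables of `P`, half the degrees of the cohomology classes they
stand for. -/
def weight : Fin 16 → ℕ := ![1, 1, 1, 1, 1, 1, 1, 1, 1, 3, 4, 5, 6, 9, 10, 15]

/-- The sixteen relations `rho1, …, rho30` as a family. -/
noncomputable def relation : Fin 16 → P :=
  ![rho1, rho2, rho3, rho4, rho5, rho6, rho8, rho9, rho10, rho12,
    rho14, rho15, rho18, rho20, rho24, rho30]

/-- The degrees of the relations, half their degrees in cohomology. -/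
def relationDegree : Fin 16 → ℕ := ![1, 2, 3, 4, 5, 6, 8, 9, 10, 12, 14, 15, 18, 20, 24, 30]

lemma isWeightedHomogeneous_c (n : ℕ) : IsWeightedHomogeneous weight (c n) n := by
  simp only [c, esymm, map_sum, map_prod, rename_X]
  refine IsWeightedHomogeneous.sum _ _ _ fun m hm ↦ ?_
  have hweight (j : Fin 8) : weight (Fin.castLE (by norm_num) j) = 1 := by fin_cases j <;> rfl
  convert! IsWeightedHomogeneous.prod m (fun j ↦ (X (Fin.castLE (by norm_num) j) : P)) _
    fun j _ ↦ isWeightedHomogeneous_X ℤ weight _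
  simp only [hweight, Finset.sum_const, smul_eq_mul, mul_one, (Finset.mem_powersetCard.mp hm).2]

lemma weightScaling_X (i : Fin 16) :
    weightScaling weight (X i : P) = Polynomial.C (X i) * Polynomial.X ^ weight i :=
  aeval_X _ _

lemma weightScaling_c (n : ℕ) :
    weightScaling weight (c n) = Polynomial.C (c n) * Polynomial.X ^ n :=
  isWeightedHomogeneous_iff_weightScaling.mp (isWeightedHomogeneous_c n)

lemma weightScaling_v : weightScaling weight v = Polynomial.C v * Polynomial.X ^ 6 := by
  simp only [v, u, t, g3, g4, g5, g6, map_add, map_sub, map_neg, map_mul, map_pow, map_ofNat,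
    weightScaling_X]
  simp only [weight, Matrix.cons_val]
  ring

lemma weightScaling_w : weightScaling weight w = Polynomial.C w * Polynomial.X ^ 10 := by
  simp only [w, u, t, g3, g4, g5, g6, g9, g10, map_add, map_sub, map_neg, map_mul, map_pow,
    map_ofNat, weightScaling_X, weightScaling_c]
  simp only [weight, Matrix.cons_val]
  ring

lemma weightScaling_x : weightScaling weight x = Polynomial.C x * Polynomial.X ^ 15 := by
  simp only [x, u, t, g3, g4, g5, g6, g9, g10, g15, map_add, map_sub, map_neg, map_mul, map_pow,
    map_ofNat, weightScaling_X, weightScaling_c]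
  simp only [weight, Matrix.cons_val]
  ring

lemma isWeightedHomogeneous_relation (i : Fin 16) :
    IsWeightedHomogeneous weight (relation i) (relationDegree i) := by
  rw [isWeightedHomogeneous_iff_weightScaling]
  fin_cases i <;> simp only [relation, relationDegree, Fin.zero_eta, Fin.mk_one,
    Fin.reduceFinMk, Matrix.cons_val] <;>
  · simp only [rho1, rho2, rho3, rho4, rho5, rho6, rho8, rho9, rho10, rho12, rho14, rho15, rho18,
      rho20, rho24, rho30, u, t, g3, g4, g5, g6, g9, g10, g15, map_add, map_sub, map_neg, map_mul,
      map_pow, map_ofNat, weightScaling_X, weightScaling_c, weightScaling_v, weightScaling_w,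
      weightScaling_x]
    simp only [weight, Matrix.cons_val]
    ring

lemma relIdeal_eq_span_range_relation : relIdeal = Ideal.span (Set.range relation) := by
  simp only [relIdeal, relation, Matrix.range_cons, Matrix.range_empty, Set.union_empty,
    Set.singleton_union]

/-- The variable `t_{j+1}` of `P`. -/
noncomputable def tVar (j : Fin 8) : P := X (Fin.castLE (by norm_num) j)

/-- A lift to `P` of the degree 5 generator of `H^*(E₇/(E₆ × S¹)) = ℤ[y1, y5, y9]/(r10, r14, r18)`,
depending on the root `y1 = s` of the polynomial with coefficients `± c i`. -/
noncomputable def y5 (s : P) : P :=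
  g5 - s * g4 + s ^ 2 * g3 + s * t ^ 4 - s ^ 2 * t ^ 3 - s ^ 3 * t ^ 2 + s ^ 4 * t

/-- A lift to `P` of the degree 9 generator of `H^*(E₇/(E₆ × S¹))`; see `y5`. -/
noncomputable def y9 (s : P) : P :=
  g9 - g4 * g5 + t ^ 4 * g5
    + s * (2 * t ^ 4 * g4 - g4 ^ 2 - t ^ 8)
    + s ^ 2 * (2 * g3 * g4 - 2 * t ^ 4 * g3 - t ^ 3 * g4 - t ^ 2 * g5 - 2 * t * g3 ^ 2
      - 5 * t * g6)
    + s ^ 3 * (3 * t ^ 2 * g4 + 3 * t * g5 - 2 * g3 ^ 2 - g6)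
    + s ^ 4 * (4 * t ^ 2 * g3 - 4 * t * g4 - 2 * t ^ 5)
    + 2 * s ^ 5 * t ^ 4 + s ^ 6 * (g3 - 5 * t ^ 3) + 3 * s ^ 7 * t ^ 2 - s ^ 8 * t

lemma g5_eq (s : P) :
    g5 = y5 s + s * g4 - s ^ 2 * g3 - s * t ^ 4 + s ^ 2 * t ^ 3 + s ^ 3 * t ^ 2 - s ^ 4 * t := by
  rw [y5]
  ring

lemma g9_eq (s : P) :
    g9 = y9 s + g4 * g5 - t ^ 4 * g5
      - s * (2 * t ^ 4 * g4 - g4 ^ 2 - t ^ 8)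
      - s ^ 2 * (2 * g3 * g4 - 2 * t ^ 4 * g3 - t ^ 3 * g4 - t ^ 2 * g5 - 2 * t * g3 ^ 2
        - 5 * t * g6)
      - s ^ 3 * (3 * t ^ 2 * g4 + 3 * t * g5 - 2 * g3 ^ 2 - g6)
      - s ^ 4 * (4 * t ^ 2 * g3 - 4 * t * g4 - 2 * t ^ 5)
      - 2 * s ^ 5 * t ^ 4 - s ^ 6 * (g3 - 5 * t ^ 3) - 3 * s ^ 7 * t ^ 2 + s ^ 8 * t := by
  rw [y9]
  ring

lemma alternating_sum_c_mul_tVar_pow (j : Fin 8) :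
    tVar j ^ 8 - c 1 * tVar j ^ 7 + c 2 * tVar j ^ 6 - c 3 * tVar j ^ 5 + c 4 * tVar j ^ 4
      - c 5 * tVar j ^ 3 + c 6 * tVar j ^ 2 - c 7 * tVar j + c 8 = 0 := by
  have hprod : ∏ i : Fin 8, (-X j + X i : MvPolynomial (Fin 8) ℤ) = 0 :=
    Finset.prod_eq_zero (Finset.mem_univ j) (neg_add_cancel _)
  have h := congrArg (fun p ↦ rename (Fin.castLE (by norm_num : 8 ≤ 16)) (p.eval (-X j)))
    (prod_C_add_X_eq_sum_esymm ℤ (Fin 8))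
  simp only [Polynomial.eval_prod, Polynomial.eval_add, Polynomial.eval_X, Polynomial.eval_C,
    Polynomial.eval_zero, Polynomial.eval_one, Polynomial.eval_mul, Polynomial.eval_pow, hprod,
    Finset.sum_range_succ, Finset.sum_range_zero, Fintype.card_fin, map_add, map_mul, map_pow,
    map_neg, map_zero, map_one, rename_X, esymm_zero] at h
  simp only [c, tVar]
  linear_combination -h

lemma map_c_eq_zero {F : Type*} [CommRing F] {φ : P →+* F} (ht : ∀ j, φ (tVar j) = 0) {n : ℕ}
    (hn : n ≠ 0) : φ (c n) = 0 := by
  have hterm (m : Finset (Fin 8)) (hm : m ∈ Finset.univ.powersetCard n) :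
      ∏ j ∈ m, φ (tVar j) = 0 := by
    obtain ⟨j, hj⟩ : m.Nonempty := by
      rw [← Finset.card_pos, (Finset.mem_powersetCard.mp hm).2]
      exact Nat.pos_of_ne_zero hn
    exact Finset.prod_eq_zero hj (ht j)
  simp only [c, esymm, map_sum, map_prod, rename_X]
  exact Finset.sum_eq_zero hterm

section Zeros

variable {F : Type*} [CommRing F] {φ : P →+* F}

lemma map_relation (hφ : relIdeal ≤ RingHom.ker φ) (i : Fin 16) : φ (relation i) = 0 :=
  hφ (relIdeal_eq_span_range_relation ▸ Ideal.subset_span (Set.mem_range_self i))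

lemma map_c_six (hφ : relIdeal ≤ RingHom.ker φ) :
    φ (c 6) = 2 * φ g3 ^ 2 + φ t * φ g5 - φ t ^ 2 * φ g4 + 2 * φ t ^ 6 + 5 * φ g6 := by
  have h6 : φ rho6 = 0 := map_relation hφ 5
  simp only [rho6, map_sub, map_add, map_mul, map_pow, map_ofNat] at h6
  linear_combination h6

lemma map_c_eight_eq (hφ : relIdeal ≤ RingHom.ker φ) (j : Fin 8) :
    φ (c 8) = -(φ (tVar j) ^ 8 - 3 * φ t * φ (tVar j) ^ 7 + 4 * φ t ^ 2 * φ (tVar j) ^ 6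
      - 2 * φ g3 * φ (tVar j) ^ 5 + (3 * φ g4 - 2 * φ t ^ 4) * φ (tVar j) ^ 4
      - (3 * φ t * φ g4 - 2 * φ t ^ 2 * φ g3 + 2 * φ g5) * φ (tVar j) ^ 3
      + φ (c 6) * φ (tVar j) ^ 2 - φ (c 7) * φ (tVar j)) := by
  have h1 : φ rho1 = 0 := map_relation hφ 0
  have h2 : φ rho2 = 0 := map_relation hφ 1
  have h3 : φ rho3 = 0 := map_relation hφ 2
  have h4 : φ rho4 = 0 := map_relation hφ 3
  have h5 : φ rho5 = 0 := map_relation hφ 4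
  have hroot := congrArg φ (alternating_sum_c_mul_tVar_pow j)
  simp only [rho1, rho2, rho3, rho4, rho5, map_sub, map_add, map_mul, map_pow, map_ofNat,
    map_zero] at h1 h2 h3 h4 h5 hroot
  linear_combination hroot + φ (tVar j) ^ 7 * h1 - φ (tVar j) ^ 6 * h2 + φ (tVar j) ^ 5 * h3
    - φ (tVar j) ^ 4 * h4 + φ (tVar j) ^ 3 * h5

lemma two_mul_map_x (hφ : relIdeal ≤ RingHom.ker φ) : 2 * φ x = φ u ^ 15 := by
  have h6 := map_c_six hφ
  have hu : φ (c 8) = _ := map_c_eight_eq hφ 7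
  have h8 : φ rho8 = 0 := map_relation hφ 6
  have h9 : φ rho9 = 0 := map_relation hφ 7
  have h10 : φ rho10 = 0 := map_relation hφ 8
  have h12 : φ rho12 = 0 := map_relation hφ 9
  have h14 : φ rho14 = 0 := map_relation hφ 10
  have h15 : φ rho15 = 0 := map_relation hφ 11
  simp only [rho8, rho9, rho10, rho12, rho14, rho15, x, map_sub, map_add, map_mul, map_neg,
    map_pow, map_ofNat] at h8 h9 h10 h12 h14 h15 ⊢
  rw [show tVar 7 = u from rfl] at hu
  generalize φ t = t, φ g3 = g3, φ g4 = g4, φ g5 = g5, φ g6 = g6, φ g9 = g9, φ g10 = g10,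
    φ g15 = g15, φ u = u, φ (c 6) = c6, φ (c 7) = c7, φ (c 8) = c8 at *
  subst hu h6
  linear_combination -39 * u ^ 7 * h8
    + (u ^ 6 + u ^ 5 * t + u ^ 4 * t ^ 2 + u ^ 3 * (t ^ 3 + g3) + u ^ 2 * (t ^ 4 + g4) + u * g5
      + t ^ 6 + t * g5 + g6) * h9
    + u * (3 * t ^ 4 + 4 * t ^ 3 * u - 3 * t ^ 2 * u ^ 2 - 10 * t * u ^ 3 - 2 * t * g3) * h10
    - u ^ 3 * h12 + u * h14 - h15

lemma four_mul_map_rho30_eliminate_x (hφ : relIdeal ≤ RingHom.ker φ) :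
    -9 * φ u ^ 30 - 24 * φ u ^ 24 * φ v - 12 * φ u ^ 20 * φ w + 4 * (9 * φ u ^ 14 * φ v * φ w
      - 10 * φ u ^ 12 * φ v ^ 3 - 3 * φ u ^ 10 * φ w ^ 2 + 30 * φ u ^ 8 * φ v ^ 2 * φ w
      - 35 * φ u ^ 6 * φ v ^ 4 + 6 * φ u ^ 4 * φ v * φ w ^ 2 - 10 * φ u ^ 2 * φ v ^ 3 * φ w
      - 4 * φ v ^ 5 - 2 * φ w ^ 3) = 0 := by
  have hx := two_mul_map_x hφ
  have h30 : φ rho30 = 0 := map_relation hφ 15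
  simp only [rho30, map_sub, map_add, map_mul, map_neg, map_pow, map_ofNat] at h30
  linear_combination 4 * h30
    + (9 * (2 * φ x + φ u ^ 15) + 24 * φ u ^ 9 * φ v + 12 * φ u ^ 5 * φ w) * hx

-- `58` exceeds the complex dimension 57 of `E₈/(E₇ × S¹)`, whose cohomology is
-- `ℤ[u, v, w, x]/(2 * x - u ^ 15, rho20, rho24, rho30)`.
lemma map_u_pow_eq_zero (hφ : relIdeal ≤ RingHom.ker φ) : φ u ^ 58 = 0 := by
  have h20 : φ rho20 = 0 := map_relation hφ 13
  have h24 : φ rho24 = 0 := map_relation hφ 14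
  have h30 := four_mul_map_rho30_eliminate_x hφ
  simp only [rho20, rho24, map_add, map_mul, map_pow, map_ofNat] at h20 h24
  generalize φ u = u, φ v = v, φ w = w at *
  linear_combination (15153512875055600 * v ^ 6 * u ^ 2 + 526037703542190527 * v ^ 5 * u ^ 8
      - 341931909022165 * v ^ 4 * w * u ^ 4 + 4746119625938157585 * v ^ 4 * u ^ 14
      + 2538750337704000 * v ^ 3 * w ^ 2 + 1627507027834286510 * v ^ 3 * w * u ^ 10
      + 9043320711760269995 * v ^ 3 * u ^ 20 - 267108048107953350 * v ^ 2 * w ^ 2 * u ^ 6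
      + 4162080477443790285 * v ^ 2 * w * u ^ 16 + 6496213228733495325 * v ^ 2 * u ^ 26
      + 20651320676703400 * v * w ^ 3 * u ^ 2 + 302493018385800975 * v * w ^ 2 * u ^ 12
      + 2279029780364910855 * v * w * u ^ 22 + 1974876448394881150 * v * u ^ 32
      - 39017735376369521 * w ^ 3 * u ^ 8 + 54553510097744892 * w ^ 2 * u ^ 18
      + 330001053672679530 * w * u ^ 28 + 212244389716445925 * u ^ 38) * h20
    + (-11411635266502080 * v ^ 5 * u ^ 4 + 3046500405244800 * v ^ 4 * w
      - 824486025693878950 * v ^ 4 * u ^ 10 + 80892563752381530 * v ^ 3 * w * u ^ 6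
      - 4727092776025774590 * v ^ 3 * u ^ 16 - 50775006754080 * v ^ 2 * w ^ 2 * u ^ 2
      - 1720903799837189430 * v ^ 2 * w * u ^ 12 - 4502968947774440295 * v ^ 2 * u ^ 22
      - 9288458933711271 * v * w ^ 2 * u ^ 8 - 1126270160753731149 * v * w * u ^ 18
      - 1530604612270057668 * v * u ^ 28 + 5322871740913899 * w ^ 3 * u ^ 4
      + 853464718768689 * w ^ 2 * u ^ 14 - 177981049530817131 * w * u ^ 24
      - 174277724728715077 * u ^ 34) * h24
    + (5904809526127850 * v ^ 4 * u ^ 4 + 952031376639000 * v ^ 3 * w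
      + 33486639362988920 * v ^ 3 * u ^ 10 + 20413317404275350 * v ^ 2 * w * u ^ 6
      + 29887345917663645 * v ^ 2 * u ^ 16 + 7744245253763775 * v * w ^ 2 * u ^ 2
      - 9979251048703140 * v * w * u ^ 12 + 5539176994229415 * v * u ^ 22
      - 8643420057610434 * w ^ 2 * u ^ 8 - 10171220562970536 * w * u ^ 18
      - 761718285316947 * u ^ 28) * h30

end Zeros

section FieldZeros

variable {F : Type*} [Field F] {φ : P →+* F}

lemma map_u (hφ : relIdeal ≤ RingHom.ker φ) : φ u = 0 :=
  eq_zero_of_pow_eq_zero (map_u_pow_eq_zero hφ)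

lemma two_mul_map_x_eq_zero (hφ : relIdeal ≤ RingHom.ker φ) : 2 * φ x = 0 := by
  rw [two_mul_map_x hφ, map_u hφ, zero_pow (by norm_num)]

lemma three_mul_map_w_sq (hφ : relIdeal ≤ RingHom.ker φ) : 3 * φ w ^ 2 = 0 := by
  have h20 : φ rho20 = 0 := map_relation hφ 13
  simp only [rho20, map_add, map_mul, map_pow, map_ofNat, map_u hφ] at h20
  linear_combination h20

lemma five_mul_map_v_pow (hφ : relIdeal ≤ RingHom.ker φ) : 5 * φ v ^ 4 = 0 := by
  have h24 : φ rho24 = 0 := map_relation hφ 14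
  simp only [rho24, map_add, map_mul, map_pow, map_ofNat, map_u hφ] at h24
  linear_combination h24

lemma nine_mul_map_x_sq_add (hφ : relIdeal ≤ RingHom.ker φ) :
    9 * φ x ^ 2 + 4 * φ v ^ 5 + 2 * φ w ^ 3 = 0 := by
  have h30 : φ rho30 = 0 := map_relation hφ 15
  simp only [rho30, map_add, map_sub, map_neg, map_mul, map_pow, map_ofNat, map_u hφ] at h30
  linear_combination -h30

lemma map_w (hφ : relIdeal ≤ RingHom.ker φ) : φ w = 0 := by
  have h20 := three_mul_map_w_sq hφ
  rcases mul_eq_zero.mp h20 with h3 | hw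
  · have h2 : (2 : F) ≠ 0 := fun h2 ↦ one_ne_zero (by linear_combination h3 - h2 : (1 : F) = 0)
    have h5 : (5 : F) ≠ 0 := fun h5 ↦ h2 (by linear_combination h5 - h3)
    have hv : φ v = 0 :=
      eq_zero_of_pow_eq_zero ((mul_eq_zero.mp (five_mul_map_v_pow hφ)).resolve_left h5)
    have h30 : 2 * φ w ^ 3 = 0 := by
      linear_combination nine_mul_map_x_sq_add hφ - 3 * φ x ^ 2 * h3 - 4 * φ v ^ 4 * hv
    exact eq_zero_of_pow_eq_zero ((mul_eq_zero.mp h30).resolve_left h2)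
  · exact eq_zero_of_pow_eq_zero hw

lemma map_v (hφ : relIdeal ≤ RingHom.ker φ) : φ v = 0 := by
  rcases mul_eq_zero.mp (five_mul_map_v_pow hφ) with h5 | hv
  · have hv : φ v ^ 5 = 0 := by
      linear_combination φ v ^ 5 * h5 - nine_mul_map_x_sq_add hφ + 2 * φ w ^ 2 * map_w hφ
        + φ x ^ 2 * h5 + 2 * φ x * two_mul_map_x_eq_zero hφ
    exact eq_zero_of_pow_eq_zero hv
  · exact eq_zero_of_pow_eq_zero hv

lemma map_x (hφ : relIdeal ≤ RingHom.ker φ) : φ x = 0 := by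
  have hx : φ x ^ 2 = 0 := by
    linear_combination nine_mul_map_x_sq_add hφ - 4 * φ x * two_mul_map_x_eq_zero hφ
      - 4 * φ v ^ 4 * map_v hφ - 2 * φ w ^ 2 * map_w hφ
  exact eq_zero_of_pow_eq_zero hx

lemma map_c_eight (hφ : relIdeal ≤ RingHom.ker φ) : φ (c 8) = 0 := by
  rw [map_c_eight_eq hφ 7, show tVar 7 = u from rfl, map_u hφ]
  ring

lemma map_g10 (hφ : relIdeal ≤ RingHom.ker φ) : φ g10 = 0 := by
  have hw := map_w hφ
  simp only [w, map_add, map_sub, map_neg, map_mul, map_pow, map_ofNat, map_u hφ] at hw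
  linear_combination hw

lemma two_mul_map_g6 (hφ : relIdeal ≤ RingHom.ker φ) :
    2 * φ g6 = φ t ^ 2 * φ g4 - φ g3 ^ 2 - φ t ^ 6 := by
  have hv := map_v hφ
  simp only [v, map_add, map_sub, map_neg, map_mul, map_pow, map_ofNat, map_u hφ] at hv
  linear_combination hv

lemma map_c_seven (hφ : relIdeal ≤ RingHom.ker φ) {j : Fin 8} (hj : φ (tVar j) ≠ 0) :
    φ (c 7) = φ (tVar j) ^ 7 - 3 * φ t * φ (tVar j) ^ 6 + 4 * φ t ^ 2 * φ (tVar j) ^ 5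
      - 2 * φ g3 * φ (tVar j) ^ 4 + (3 * φ g4 - 2 * φ t ^ 4) * φ (tVar j) ^ 3
      - (3 * φ t * φ g4 - 2 * φ t ^ 2 * φ g3 + 2 * φ g5) * φ (tVar j) ^ 2
      + φ (c 6) * φ (tVar j) :=
  mul_left_cancel₀ hj (by linear_combination map_c_eight hφ - map_c_eight_eq hφ j)

lemma map_y5_sq (hφ : relIdeal ≤ RingHom.ker φ) {j : Fin 8} (hj : φ (tVar j) ≠ 0) :
    φ (y5 (tVar j)) ^ 2 - 2 * φ (tVar j) * φ (y9 (tVar j)) = 0 := by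
  have h6 := map_c_six hφ
  have h7 := map_c_seven hφ hj
  have hg6 := two_mul_map_g6 hφ
  have h8 : φ rho8 = 0 := map_relation hφ 6
  have h9 : φ rho9 = 0 := map_relation hφ 7
  have h10 : φ rho10 = 0 := map_relation hφ 8
  simp only [y5, y9, rho8, rho9, rho10, map_sub, map_add, map_mul, map_neg, map_pow, map_ofNat,
    map_c_eight hφ, map_g10 hφ] at h8 h9 h10 ⊢
  generalize φ t = t, φ g3 = g3, φ g4 = g4, φ g5 = g5, φ g6 = g6, φ g9 = g9,
    φ (tVar j) = s, φ (c 6) = c6, φ (c 7) = c7 at *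
  subst h6 h7
  linear_combination s ^ 4 * hg6 + s ^ 2 * h8 + s * h9 + h10

lemma map_y5_mul_y9 (hφ : relIdeal ≤ RingHom.ker φ) {j : Fin 8} (hj : φ (tVar j) ≠ 0) :
    2 * φ (y5 (tVar j)) * φ (y9 (tVar j)) - 9 * φ (tVar j) ^ 4 * φ (y5 (tVar j)) ^ 2
      + 6 * φ (tVar j) ^ 9 * φ (y5 (tVar j)) - φ (tVar j) ^ 14 = 0 := by
  have h6 := map_c_six hφ
  have h7 := map_c_seven hφ hj
  have hg6 := two_mul_map_g6 hφ
  have h9 : φ rho9 = 0 := map_relation hφ 7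
  have h10 : φ rho10 = 0 := map_relation hφ 8
  have h12 : φ rho12 = 0 := map_relation hφ 9
  have h14 : φ rho14 = 0 := map_relation hφ 10
  simp only [rho9, rho10, rho12, rho14, map_sub, map_add, map_mul, map_neg, map_pow, map_ofNat,
    map_c_eight hφ, map_g10 hφ, h7, h6, g9_eq (tVar j), g5_eq (tVar j)] at h9 h10 h12 h14
  generalize φ t = t, φ g3 = g3, φ g4 = g4, φ g6 = g6, φ (tVar j) = s, φ (y5 (tVar j)) = y5,
    φ (y9 (tVar j)) = y9 at *
  linear_combination
    -(-5 * s ^ 8 + 4 * s ^ 7 * t - 4 * s ^ 6 * t ^ 2 + 4 * s ^ 5 * t ^ 3 - 10 * s ^ 4 * t ^ 4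
      + 4 * s ^ 4 * t * g3 + 10 * s ^ 3 * t ^ 5 - 8 * s ^ 3 * t ^ 2 * g3 + 4 * s ^ 3 * t * g4
      + 16 * s ^ 3 * y5 - 8 * s ^ 2 * t ^ 6 - 2 * s ^ 2 * t ^ 3 * g3 + 2 * s ^ 2 * t ^ 2 * g4
      - 8 * s ^ 2 * t * y5 - 6 * s ^ 2 * g3 ^ 2 - 20 * s ^ 2 * g6 + 2 * s * t ^ 7
      + 4 * s * t ^ 4 * g3 + 2 * s * t ^ 3 * g4 + 4 * s * t ^ 2 * y5 + 8 * s * t * g3 ^ 2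
      + 20 * s * t * g6 - 4 * s * g3 * g4 + 2 * t ^ 8 - 12 * t ^ 5 * g3 + 8 * t ^ 4 * g4
      + 6 * t ^ 3 * y5 + 4 * t ^ 2 * g3 ^ 2 - 10 * t ^ 2 * g6 - 12 * t * g3 * g4 - 4 * g3 * y5
      + 6 * g4 ^ 2) * hg6
    - y5 * h9 - (s ^ 4 + s ^ 2 * t ^ 2 + t ^ 4 - 2 * t * g3 + 2 * g4) * h10 - s ^ 2 * h12 - h14

lemma two_mul_map_y9_sq (hφ : relIdeal ≤ RingHom.ker φ) {j : Fin 8} (hj : φ (tVar j) ≠ 0) :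
    2 * (φ (y9 (tVar j)) ^ 2 + 10 * φ (tVar j) ^ 3 * φ (y5 (tVar j)) ^ 3
      - 9 * φ (tVar j) ^ 8 * φ (y5 (tVar j)) ^ 2 + 2 * φ (tVar j) ^ 13 * φ (y5 (tVar j))) = 0 := by
  have h6 := map_c_six hφ
  have h7 := map_c_seven hφ hj
  have hg6 := two_mul_map_g6 hφ
  have h8 : φ rho8 = 0 := map_relation hφ 6
  have h9 : φ rho9 = 0 := map_relation hφ 7
  have hr10 := map_y5_sq hφ hj
  have h12 : φ rho12 = 0 := map_relation hφ 9
  have h18 : φ rho18 = 0 := map_relation hφ 12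
  simp only [rho8, rho9, rho12, rho18, map_sub, map_add, map_mul, map_neg, map_pow, map_ofNat,
    map_c_eight hφ, map_g10 hφ, h7, h6, g9_eq (tVar j), g5_eq (tVar j)] at h8 h9 h12 h18
  generalize φ t = t, φ g3 = g3, φ g4 = g4, φ g6 = g6, φ (tVar j) = s, φ (y5 (tVar j)) = y5,
    φ (y9 (tVar j)) = y9 at *
  rcases eq_or_ne (2 : F) 0 with h2 | h2
  · rw [h2, zero_mul]
  clear h6 h7
  obtain ⟨a, rfl⟩ : ∃ a, t = 2 * a := ⟨t / 2, (mul_div_cancel₀ t h2).symm⟩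
  obtain ⟨b, rfl⟩ : ∃ b, g3 = 2 * b := ⟨g3 / 2, (mul_div_cancel₀ g3 h2).symm⟩
  obtain rfl : g6 = 2 * a ^ 2 * g4 - 2 * b ^ 2 - 32 * a ^ 6 :=
    mul_left_cancel₀ h2 (by linear_combination hg6)
  linear_combination
    (2 * s ^ 9 + 8 * s ^ 7 * a ^ 2 + 96 * s ^ 5 * a ^ 4 - 16 * s ^ 5 * a * b - 192 * s ^ 4 * a ^ 5
      + 32 * s ^ 4 * a ^ 2 * b - 4 * s ^ 4 * y5 - 384 * s ^ 3 * a ^ 6 + 160 * s ^ 3 * a ^ 3 * b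
      - 16 * s ^ 3 * b ^ 2 + 768 * s ^ 2 * a ^ 7 - 128 * s ^ 2 * a ^ 4 * b
      - 48 * s ^ 2 * a ^ 3 * g4 - 16 * s ^ 2 * a ^ 2 * y5 + 8 * s ^ 2 * b * g4 - 768 * s * a ^ 8
      + 512 * s * a ^ 5 * b - 80 * s * a ^ 4 * g4 - 48 * s * a ^ 3 * y5
      - 144 * s * a ^ 2 * b ^ 2 + 64 * s * a * b * g4 + 8 * s * b * y5 - 8 * s * g4 ^ 2
      - 2 * y9) * (s * h8 + h9)
    + (2 * s ^ 10 - 4 * s ^ 5 * y5 - 2 * s * y9) * h8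
    + (-2 * s ^ 8 - 8 * s ^ 7 * a + 8 * s ^ 6 * a ^ 2 - 32 * s ^ 5 * a ^ 3 + 64 * s ^ 4 * a ^ 4
      - 128 * s ^ 3 * a ^ 5 + 32 * s ^ 3 * a ^ 2 * b - 8 * s ^ 3 * a * g4 + 4 * s ^ 3 * y5
      + 256 * s ^ 2 * a ^ 6 - 128 * s ^ 2 * a ^ 3 * b + 32 * s ^ 2 * a ^ 2 * g4
      + 16 * s ^ 2 * a * y5 + 256 * s * a ^ 7 - 48 * s * a ^ 3 * g4 + 16 * s * a * b ^ 2
      - 1024 * a ^ 8 + 256 * a ^ 5 * b + 32 * a ^ 4 * g4 - 16 * a * b * g4 + 2 * g4 ^ 2) * hr10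
    + (4 * s * y5 - 2 * s ^ 6) * h12 - 2 * h18

lemma map_tVar (hφ : relIdeal ≤ RingHom.ker φ) (j : Fin 8) : φ (tVar j) = 0 := by
  by_contra hj
  have h10 := map_y5_sq hφ hj
  have h14 := map_y5_mul_y9 hφ hj
  have h18 := two_mul_map_y9_sq hφ hj
  refine hj ?_
  generalize φ (tVar j) = s, φ (y5 (tVar j)) = y5, φ (y9 (tVar j)) = y9 at *
  -- Eliminating `y9` leaves a cubic and, unless `2 = 0`, a quartic in `y5`; their resultant is a
  -- power of `s` up to sign.
  have hcubic : y5 ^ 3 - 9 * s ^ 5 * y5 ^ 2 + 6 * s ^ 10 * y5 - s ^ 15 = 0 := by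
    linear_combination s * h14 + y5 * h10
  rcases mul_eq_zero.mp h18 with h2 | h18
  · obtain rfl : y5 = 0 := by
      have : y5 ^ 2 = 0 := by linear_combination h10 + s * y9 * h2
      exact eq_zero_of_pow_eq_zero this
    have hs : s ^ 15 = 0 := by linear_combination -hcubic
    exact eq_zero_of_pow_eq_zero hs
  · have hquartic : y5 ^ 4 + 40 * s ^ 5 * y5 ^ 3 - 36 * s ^ 10 * y5 ^ 2 + 8 * s ^ 15 * y5 = 0 := by
      linear_combination 4 * s ^ 2 * h18 + (y5 ^ 2 + 2 * s * y9) * h10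
    have hs : s ^ 30 = 0 := by
      linear_combination -(s ^ 15 + 123070 * y5 * s ^ 10 - 264993 * y5 ^ 2 * s ^ 5
        - 6555 * y5 ^ 3) * hcubic
        - (15383 * s ^ 10 - 56202 * y5 * s ^ 5 + 6555 * y5 ^ 2) * hquartic
    exact eq_zero_of_pow_eq_zero hs

lemma map_c (hφ : relIdeal ≤ RingHom.ker φ) {n : ℕ} (hn : n ≠ 0) : φ (c n) = 0 :=
  map_c_eq_zero (map_tVar hφ) hn

lemma map_t (hφ : relIdeal ≤ RingHom.ker φ) : φ t = 0 := by
  have h1 : φ rho1 = 0 := map_relation hφ 0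
  have h2 : φ rho2 = 0 := map_relation hφ 1
  simp only [rho1, rho2, map_sub, map_mul, map_pow, map_ofNat, map_c hφ one_ne_zero,
    map_c hφ two_ne_zero] at h1 h2
  have ht : φ t ^ 2 = 0 := by linear_combination φ t * h1 - h2
  exact eq_zero_of_pow_eq_zero ht

lemma map_g3 (hφ : relIdeal ≤ RingHom.ker φ) : φ g3 = 0 := by
  have h6 := map_c_six hφ
  have hg6 := two_mul_map_g6 hφ
  simp only [map_t hφ, map_c hφ (show 6 ≠ 0 by norm_num)] at h6 hg6
  have h : φ g3 ^ 2 = 0 := by linear_combination 5 * hg6 + 2 * h6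
  exact eq_zero_of_pow_eq_zero h

lemma map_g6 (hφ : relIdeal ≤ RingHom.ker φ) : φ g6 = 0 := by
  have h6 := map_c_six hφ
  have hg6 := two_mul_map_g6 hφ
  simp only [map_t hφ, map_g3 hφ, map_c hφ (show 6 ≠ 0 by norm_num)] at h6 hg6
  linear_combination -h6 - 2 * hg6

lemma map_g5 (hφ : relIdeal ≤ RingHom.ker φ) : φ g5 = 0 := by
  have h10 : φ rho10 = 0 := map_relation hφ 8
  simp only [rho10, map_sub, map_add, map_mul, map_pow, map_ofNat, map_t hφ, map_g3 hφ,
    map_g10 hφ] at h10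
  have h : φ g5 ^ 2 = 0 := by linear_combination h10
  exact eq_zero_of_pow_eq_zero h

lemma map_g4 (hφ : relIdeal ≤ RingHom.ker φ) : φ g4 = 0 := by
  have h4 : φ rho4 = 0 := map_relation hφ 3
  have h12 : φ rho12 = 0 := map_relation hφ 9
  simp only [rho4, rho12, map_sub, map_add, map_mul, map_neg, map_pow, map_ofNat, map_t hφ,
    map_g3 hφ, map_g5 hφ, map_g6 hφ, map_c hφ (show 4 ≠ 0 by norm_num),
    map_c hφ (show 7 ≠ 0 by norm_num), map_c_eight hφ] at h4 h12
  have h : φ g4 ^ 3 = 0 := by linear_combination h12 - φ g4 ^ 2 * h4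
  exact eq_zero_of_pow_eq_zero h

lemma map_g9 (hφ : relIdeal ≤ RingHom.ker φ) : φ g9 = 0 := by
  have h18 : φ rho18 = 0 := map_relation hφ 12
  simp only [rho18, map_sub, map_add, map_mul, map_neg, map_pow, map_ofNat, map_t hφ,
    map_g3 hφ, map_g4 hφ, map_g5 hφ, map_g6 hφ, map_g10 hφ, map_c_eight hφ] at h18
  have h : φ g9 ^ 2 = 0 := by linear_combination h18
  exact eq_zero_of_pow_eq_zero h

lemma map_g15 (hφ : relIdeal ≤ RingHom.ker φ) : φ g15 = 0 := by
  have hx := map_x hφ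
  simp only [x, map_sub, map_add, map_mul, map_neg, map_pow, map_ofNat, map_u hφ, map_t hφ,
    map_g3 hφ, map_g4 hφ, map_g5 hφ, map_g6 hφ, map_g9 hφ, map_g10 hφ] at hx
  linear_combination hx

lemma map_X (hφ : relIdeal ≤ RingHom.ker φ) (i : Fin 16) : φ (X i) = 0 := by
  have hlast (i : Fin 8) : φ (X (Fin.natAdd 8 i)) = 0 := by
    fin_cases i
    exacts [map_t hφ, map_g3 hφ, map_g4 hφ, map_g5 hφ, map_g6 hφ, map_g9 hφ,
      map_g10 hφ, map_g15 hφ]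
  exact Fin.addCases (m := 8) (n := 8) (motive := fun i ↦ φ (X i) = 0) (map_tVar hφ) hlast i

end FieldZeros

lemma idealOfVars_le_radical_relIdeal : idealOfVars (Fin 16) ℤ ≤ relIdeal.radical := by
  rw [Ideal.radical_eq_sInf]
  refine le_sInf fun J ⟨hle, hJ⟩ ↦ Ideal.span_le.mpr ?_
  rintro _ ⟨i, rfl⟩
  have hker : RingHom.ker (algebraMap P J.ResidueField) = J :=
    Ideal.ext fun _ ↦ Ideal.algebraMap_residueField_eq_zero
  have hX := map_X (φ := algebraMap P J.ResidueField) (hker.symm ▸ hle) i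
  exact Ideal.algebraMap_residueField_eq_zero.mp hX

lemma weight_ne_zero (i : Fin 16) : weight i ≠ 0 := by
  decide +revert

lemma relationDegree_ne_zero (i : Fin 16) : relationDegree i ≠ 0 := by
  decide +revert

lemma prod_relationDegree : ∏ i, relationDegree i = 696729600 * ∏ i, weight i := by
  simp [Fin.prod_univ_succ, relationDegree, weight]

end E8T

/-- `P/I` is a free `ℤ`-module of rank `696729600 = |W(E₈)|`
(the integral cohomology ring `H^*(E₈/T; ℤ)` is free abelian of rank
`|W(E₈)|`). -/
theorem free_rank_E8T :
    Module.Free ℤ (E8T.P ⧸ E8T.relIdeal) ∧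
    Module.rank ℤ (E8T.P ⧸ E8T.relIdeal) = 696729600 := by
  have hrad := E8T.idealOfVars_le_radical_relIdeal
  have hfin : Module.Finite ℤ (E8T.P ⧸ E8T.relIdeal) :=
    finite_quotient_of_idealOfVars_le_radical hrad
  rw [E8T.relIdeal_eq_span_range_relation] at hrad hfin ⊢
  obtain ⟨hfree, hrank⟩ := free_and_finrank_quotient_mul_prod_weights E8T.weight_ne_zero
    E8T.relationDegree_ne_zero E8T.isWeightedHomogeneous_relation hrad
  have hpos : 0 < ∏ i, E8T.weight i :=
    Finset.prod_pos fun i _ ↦ Nat.pos_of_ne_zero (E8T.weight_ne_zero i)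
  rw [E8T.prod_relationDegree] at hrank
  refine ⟨hfree, ?_⟩
  rw [← Module.finrank_eq_rank, Nat.eq_of_mul_eq_mul_right hpos hrank]
  exact Nat.cast_ofNat
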